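/- arXiv:0907.0887 — 5 statements merged into one kernel-verified Lean document; each statement's English description precedes it below -/
import Mathlib

section
/- Let V ∈ 𝒱(r, d−1) be a (d−1)-dimensional lattice r-subspace. Then there exists a nonzero vector g ∈ Γ whose orthogonal projection onto V vanishes (g_V = 0) and which satisfies |g| ≤ 2 d(Γ) ω_{d−1}^{−1} π^{1−d} r^{d−1}. -/
noncomputable section

open Set Submodule Module MeasureTheory Relation
open scoped RealInnerProductSpace

variable {d : ℕ}

/-- The lattice Γ generated over ℤ by the basis `B` of ℝ^d. -/
def latticeOf (B : Basis (Fin d) ℝ (EuclideanSpace ℝ (Fin d))) :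
    Submodule ℤ (EuclideanSpace ℝ (Fin d)) :=
  Submodule.span ℤ (Set.range B)

/-- The determinant d(Γ) of the lattice generated by `B`. -/
def latDet (B : Basis (Fin d) ℝ (EuclideanSpace ℝ (Fin d))) : ℝ :=
  |(EuclideanSpace.basisFun (Fin d) ℝ).toBasis.det (fun i => B i)|

/-- The dual lattice Γ† = {θ : θ·g ∈ 2πℤ for all g ∈ Γ}. -/
def dualLattice (B : Basis (Fin d) ℝ (EuclideanSpace ℝ (Fin d))) :
    Set (EuclideanSpace ℝ (Fin d)) :=
  {θ | ∀ g ∈ latticeOf B, ∃ k : ℤ, ⟪θ, g⟫ = 2 * Real.pi * k}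

/-- Θ_r : nonzero dual lattice vectors of norm at most r. -/
def Theta (B : Basis (Fin d) ℝ (EuclideanSpace ℝ (Fin d))) (r : ℝ) :
    Set (EuclideanSpace ℝ (Fin d)) :=
  {θ | θ ∈ dualLattice B ∧ θ ≠ 0 ∧ ‖θ‖ ≤ r}

/-- Θ_r⁰ : dual lattice vectors of norm at most r (including 0). -/
def Theta0 (B : Basis (Fin d) ℝ (EuclideanSpace ℝ (Fin d))) (r : ℝ) :
    Set (EuclideanSpace ℝ (Fin d)) :=
  {θ | θ ∈ dualLattice B ∧ ‖θ‖ ≤ r}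

/-- A lattice r-subspace: a subspace spanned by dual lattice vectors from Θ_r⁰. -/
def IsLatticeSubspace (B : Basis (Fin d) ℝ (EuclideanSpace ℝ (Fin d))) (r : ℝ)
    (V : Submodule ℝ (EuclideanSpace ℝ (Fin d))) : Prop :=
  ∃ S : Set (EuclideanSpace ℝ (Fin d)), S ⊆ Theta0 B r ∧ V = Submodule.span ℝ S

/-- Orthogonal projection ξ_V onto a subspace, viewed in the ambient space. -/
def projV (V : Submodule ℝ (EuclideanSpace ℝ (Fin d))) (ξ : EuclideanSpace ℝ (Fin d)) :
    EuclideanSpace ℝ (Fin d) :=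
  (orthogonalProjection V ξ : EuclideanSpace ℝ (Fin d))

/-- ω_n: the volume of the unit ball in ℝ^n. -/
def unitBallVol (n : ℕ) : ℝ :=
  (MeasureTheory.volume (Metric.ball (0 : EuclideanSpace ℝ (Fin n)) 1)).toReal

/-- The resonant layer Λ(θ) (= ℝ^d when θ = 0). -/
def layer (ρ a : ℝ) (θ : EuclideanSpace ℝ (Fin d)) : Set (EuclideanSpace ℝ (Fin d)) :=
  {ξ | θ = 0 ∨ |⟪ξ, θ⟫| < ρ ^ a * ‖θ‖}

/-- Υ_θ(ξ): the points θ-resonant congruent to ξ. -/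
def upsTheta (ρ a : ℝ) (θ ξ : EuclideanSpace ℝ (Fin d)) : Set (EuclideanSpace ℝ (Fin d)) :=
  {η | ξ ∈ layer ρ a θ ∧ η ∈ layer ρ a θ ∧ ∃ l : ℤ, ξ - η = (l : ℝ) • θ}

/-- One step of resonant congruence (with some θ ∈ Θ_r⁰). -/
def resStep (B : Basis (Fin d) ℝ (EuclideanSpace ℝ (Fin d))) (ρ a r : ℝ)
    (ξ η : EuclideanSpace ℝ (Fin d)) : Prop :=
  ∃ θ ∈ Theta0 B r, η ∈ upsTheta ρ a θ ξ

/-- Υ(ξ): all points resonant congruent to ξ. -/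
def Ups (B : Basis (Fin d) ℝ (EuclideanSpace ℝ (Fin d))) (ρ a r : ℝ)
    (ξ : EuclideanSpace ℝ (Fin d)) : Set (EuclideanSpace ℝ (Fin d)) :=
  {η | Relation.ReflTransGen (resStep B ρ a r) ξ η}

/-- N(ξ) = Υ(ξ) − ξ. -/
def resN (B : Basis (Fin d) ℝ (EuclideanSpace ℝ (Fin d))) (ρ a r : ℝ)
    (ξ : EuclideanSpace ℝ (Fin d)) : Set (EuclideanSpace ℝ (Fin d)) :=
  {m | ξ + m ∈ Ups B ρ a r ξ}

/-- Ξ₁(V) = {ξ : |ξ_V| < ρ^{α_n}}, n = dim V. -/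
def Xi1 (ρ : ℝ) (α : ℕ → ℝ) (V : Submodule ℝ (EuclideanSpace ℝ (Fin d))) :
    Set (EuclideanSpace ℝ (Fin d)) :=
  {ξ | ‖projV V ξ‖ < ρ ^ α (Module.finrank ℝ V)}

/-- Ξ₂(V) = ∪_{ξ ∈ Ξ₁(V)} Υ(ξ). -/
def Xi2 (B : Basis (Fin d) ℝ (EuclideanSpace ℝ (Fin d))) (ρ r : ℝ) (α : ℕ → ℝ)
    (V : Submodule ℝ (EuclideanSpace ℝ (Fin d))) : Set (EuclideanSpace ℝ (Fin d)) :=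
  {η | ∃ ξ ∈ Xi1 ρ α V, η ∈ Ups B ρ (α 1) r ξ}

/-- Ξ(V): Ξ₂(V) minus the Ξ₂(W) for all lattice r-subspaces W of larger dimension. -/
def Xi (B : Basis (Fin d) ℝ (EuclideanSpace ℝ (Fin d))) (ρ r : ℝ) (α : ℕ → ℝ)
    (V : Submodule ℝ (EuclideanSpace ℝ (Fin d))) : Set (EuclideanSpace ℝ (Fin d)) :=
  Xi2 B ρ r α V \
    ⋃ W ∈ {W : Submodule ℝ (EuclideanSpace ℝ (Fin d)) |
        IsLatticeSubspace B r W ∧ Module.finrank ℝ V < Module.finrank ℝ W},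
      Xi2 B ρ r α W

/-- The standing conditions on the parameters ρ ≥ 1, r, κ > 0 and the exponents α_j:
0 = α₀, α_{n+1} > α_n + 2κd², α_d < 1, r ≤ ρ^κ, and r ≥ r₀ (i.e. Θ_r⁰ spans ℝ^d). -/
def GoodParams (B : Basis (Fin d) ℝ (EuclideanSpace ℝ (Fin d))) (ρ r κ : ℝ)
    (α : ℕ → ℝ) : Prop :=
  1 ≤ ρ ∧ 0 < κ ∧ α 0 = 0 ∧ (∀ n < d, α n + 2 * κ * (d : ℝ) ^ 2 < α (n + 1)) ∧
    α d < 1 ∧ r ≤ ρ ^ κ ∧ Submodule.span ℝ (Theta0 B r) = ⊤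

/-!
Minkowski's convex body theorem is applied to the cylinder of points whose projections onto `V` and
`Vᗮ` have norms less than `a = 2π / r` and `b` respectively. A lattice vector `g` in this cylinder
lies in `Vᗮ`: its inner product with a spanning vector `θ` of `V` is a multiple of `2π`, and
`|⟪θ, g⟫| ≤ ‖θ‖ ‖g_V‖ < r a = 2π`. Hence `‖g‖ = ‖g_{Vᗮ}‖ < b`. When `V` is a hyperplane of `ℝ^d`,
the cylinder has volume `2 a ^ (d - 1) ω_{d - 1} b`. If `b` is the bound of the theorem, this is
twice the `2 ^ d d(Γ)` that Minkowski's theorem asks the volume to exceed.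
-/

section BallVolume

variable {E : Type*} [NormedAddCommGroup E] [InnerProductSpace ℝ E] [FiniteDimensional ℝ E]
  [MeasurableSpace E] [BorelSpace E]

lemma unitBallVol_pos (n : ℕ) : 0 < unitBallVol n :=
  ENNReal.toReal_pos (Metric.measure_ball_pos volume _ one_pos).ne' measure_ball_lt_top.ne

lemma volume_real_ball_one :
    volume.real (Metric.ball (0 : E) 1) = unitBallVol (finrank ℝ E) := by
  have hpres := (stdOrthonormalBasis ℝ E).measurePreserving_repr
  rw [unitBallVol, ← Measure.real, ← hpres.measureReal_preimage
    measurableSet_ball.nullMeasurableSet, LinearIsometryEquiv.preimage_ball, map_zero]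

lemma volume_real_ball (x : E) {a : ℝ} (ha : 0 < a) :
    volume.real (Metric.ball x a) = a ^ finrank ℝ E * unitBallVol (finrank ℝ E) := by
  rw [← volume_real_ball_one, Measure.real, Measure.addHaar_ball_of_pos _ _ ha, ENNReal.toReal_mul,
    ENNReal.toReal_ofReal (pow_nonneg ha.le _), Measure.real]

lemma unitBallVol_one : unitBallVol 1 = 2 := by
  have h := volume_real_ball_one (E := ℝ)
  rwa [Real.volume_real_ball zero_le_one, finrank_self, mul_one, eq_comm] at h

lemma volume_real_ball_mul_volume_real_ball_orthogonal_of_hyperplane {V : Submodule ℝ E}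
    (hV : finrank ℝ V + 1 = finrank ℝ E) {a b : ℝ} (ha : 0 < a) (hb : 0 < b) :
    volume.real (Metric.ball (0 : V) a) * volume.real (Metric.ball (0 : Vᗮ) b) =
      a ^ finrank ℝ V * unitBallVol (finrank ℝ V) * (2 * b) := by
  have hperp : finrank ℝ Vᗮ = 1 := by
    have := V.finrank_add_finrank_orthogonal
    lia
  rw [volume_real_ball _ ha, volume_real_ball _ hb, hperp, unitBallVol_one, pow_one, mul_comm b]

end BallVolume

section Cylinder

variable {E : Type*} [NormedAddCommGroup E] [InnerProductSpace ℝ E]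

/-- The cylinder with base the open ball of radius `a` in `V` and cross section the open ball of
radius `b` in `Vᗮ`: the convex body to which Minkowski's theorem is applied. -/
def orthogonalCylinder (V : Submodule ℝ E) [V.HasOrthogonalProjection] (a b : ℝ) : Set E :=
  V.orthogonalProjectionOnto ⁻¹' Metric.ball 0 a ∩ Vᗮ.orthogonalProjectionOnto ⁻¹' Metric.ball 0 b

variable (V : Submodule ℝ E) {a b : ℝ}

lemma mem_orthogonalCylinder [V.HasOrthogonalProjection] {x : E} :
    x ∈ orthogonalCylinder V a b ↔
      ‖V.orthogonalProjectionOnto x‖ < a ∧ ‖Vᗮ.orthogonalProjectionOnto x‖ < b := by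
  simp only [orthogonalCylinder, Set.mem_inter_iff, Set.mem_preimage, mem_ball_zero_iff]

lemma neg_mem_orthogonalCylinder [V.HasOrthogonalProjection] {x : E}
    (hx : x ∈ orthogonalCylinder V a b) : -x ∈ orthogonalCylinder V a b := by
  simpa only [mem_orthogonalCylinder, map_neg, norm_neg] using hx

lemma convex_orthogonalCylinder [V.HasOrthogonalProjection] : Convex ℝ (orthogonalCylinder V a b) :=
  ((convex_ball _ _).linear_preimage V.orthogonalProjectionOnto.toLinearMap).inter
    ((convex_ball _ _).linear_preimage Vᗮ.orthogonalProjectionOnto.toLinearMap)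

lemma volume_orthogonalCylinder [FiniteDimensional ℝ E] [MeasurableSpace E] [BorelSpace E] :
    volume (orthogonalCylinder V a b) =
      volume (Metric.ball (0 : V) a) * volume (Metric.ball (0 : Vᗮ) b) := by
  have hpres :=
    (WithLp.volume_preserving_ofLp V Vᗮ).comp V.orthogonalDecomposition.measurePreserving
  rw [← Measure.prod_prod, ← Measure.volume_eq_prod, ← hpres.measure_preimage
    (measurableSet_ball.prod measurableSet_ball).nullMeasurableSet]
  congr 1
  ext x
  simp [mem_orthogonalCylinder, orthogonalDecomposition_apply]

end Cylinder

theorem exists_ne_zero_mem_of_covolume_mul_two_pow_lt_measureReal {E : Type*}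
    [NormedAddCommGroup E] [NormedSpace ℝ E] [FiniteDimensional ℝ E] [MeasurableSpace E]
    [BorelSpace E] (μ : Measure E) [μ.IsAddHaarMeasure] (L : Submodule ℤ E) [DiscreteTopology L]
    [IsZLattice ℝ L] {s : Set E} (h_symm : ∀ x ∈ s, -x ∈ s) (h_conv : Convex ℝ s)
    (h : ZLattice.covolume L μ * 2 ^ finrank ℝ E < μ.real s) :
    ∃ g ∈ L, g ≠ 0 ∧ g ∈ s := by
  let F := ZSpan.fundamentalDomain ((Free.chooseBasis ℤ L).ofZLatticeBasis ℝ)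
  have hF : IsAddFundamentalDomain L F μ :=
    ZLattice.isAddFundamentalDomain (Free.chooseBasis ℤ L) μ
  have hF_ne_top : μ F ≠ ⊤ := (ZSpan.fundamentalDomain_isBounded _).measure_lt_top.ne
  rw [ZLattice.covolume_eq_measure_fundamentalDomain L μ hF] at h
  have hmeas : μ F * 2 ^ finrank ℝ E < μ s :=
    calc μ F * 2 ^ finrank ℝ E
        < ENNReal.ofReal (μ.real s) :=
          (ENNReal.lt_ofReal_iff_toReal_lt (by finiteness)).mpr (by simpa [Measure.real] using h)
      _ ≤ μ s := ENNReal.ofReal_toReal_le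
  have : Countable L.toAddSubgroup := inferInstanceAs (Countable L)
  obtain ⟨⟨g, hg⟩, hg0, hgs⟩ := exists_ne_zero_mem_lattice_of_measure_mul_two_pow_lt_measure
    (L := L.toAddSubgroup) hF h_symm h_conv hmeas
  exact ⟨g, hg, fun h0 => hg0 (Subtype.ext h0), hgs⟩

section Orthogonality

variable {E : Type*} [NormedAddCommGroup E] [InnerProductSpace ℝ E]

lemma inner_eq_zero_of_inner_eq_mul_intCast {x y : E} {c : ℝ} {k : ℤ} (hk : ⟪x, y⟫ = c * k)
    (hlt : ‖x‖ * ‖y‖ < c) : ⟪x, y⟫ = 0 := by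
  have hc : 0 < c := hlt.trans_le' (by positivity)
  have habs : c * |(k : ℝ)| < c * 1 :=
    calc c * |(k : ℝ)| = |⟪x, y⟫| := by rw [hk, abs_mul, abs_of_pos hc]
      _ ≤ ‖x‖ * ‖y‖ := abs_real_inner_le_norm x y
      _ < c * 1 := by rwa [mul_one]
  have hk0 : k = 0 := Int.abs_lt_one_iff.mp (by exact_mod_cast lt_of_mul_lt_mul_left habs hc.le)
  rw [hk, hk0, Int.cast_zero, mul_zero]

lemma mem_orthogonal_span_of_inner_eq_mul_intCast {S : Set E}
    [(span ℝ S).HasOrthogonalProjection] {g : E} {a c : ℝ}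
    (hint : ∀ θ ∈ S, ∃ k : ℤ, ⟪θ, g⟫ = c * k) (hnorm : ∀ θ ∈ S, ‖θ‖ * a ≤ c)
    (hg : ‖(span ℝ S).orthogonalProjectionOnto g‖ < a) : g ∈ (span ℝ S)ᗮ := by
  have hS : ∀ θ ∈ S, ⟪θ, g⟫ = 0 := by
    intro θ hθ
    obtain rfl | hθ0 := eq_or_ne θ 0
    · exact inner_zero_left g
    obtain ⟨k, hk⟩ := hint θ hθ
    have hproj : ⟪θ, (span ℝ S).starProjection g⟫ = ⟪θ, g⟫ :=
      inner_orthogonalProjectionOnto_eq_of_mem_left ⟨θ, subset_span hθ⟩ g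
    rw [← hproj] at hk ⊢
    exact inner_eq_zero_of_inner_eq_mul_intCast hk <|
      (mul_lt_mul_of_pos_left hg (norm_pos_iff.mpr hθ0)).trans_le (hnorm θ hθ)
  have hle : span ℝ S ≤ (ℝ ∙ g)ᗮ :=
    span_le.mpr fun θ hθ => mem_orthogonal_singleton_iff_inner_left.mpr (hS θ hθ)
  exact fun v hv => mem_orthogonal_singleton_iff_inner_left.mp (hle hv)

end Orthogonality

lemma pos_of_forall_norm_le_of_span_ne_bot {E : Type*} [NormedAddCommGroup E] [NormedSpace ℝ E]
    {S : Set E} {r : ℝ} (hnorm : ∀ θ ∈ S, ‖θ‖ ≤ r) (hS : span ℝ S ≠ ⊥) : 0 < r := by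
  rw [ne_eq, span_eq_bot] at hS
  push Not at hS
  obtain ⟨θ, hθ, hθ0⟩ := hS
  exact (norm_pos_iff.mpr hθ0).trans_le (hnorm θ hθ)

section Lattice

variable {E : Type*} [NormedAddCommGroup E] [InnerProductSpace ℝ E] [FiniteDimensional ℝ E]
  [MeasurableSpace E] [BorelSpace E] (L : Submodule ℤ E) [DiscreteTopology L] [IsZLattice ℝ L]
  {S : Set E}

theorem exists_ne_zero_mem_orthogonal_span_norm_lt {a b c : ℝ}
    (hint : ∀ θ ∈ S, ∀ g ∈ L, ∃ k : ℤ, ⟪θ, g⟫ = c * k) (hnorm : ∀ θ ∈ S, ‖θ‖ * a ≤ c)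
    (hvol : ZLattice.covolume L * 2 ^ finrank ℝ E <
      volume.real (Metric.ball (0 : span ℝ S) a) * volume.real (Metric.ball (0 : (span ℝ S)ᗮ) b)) :
    ∃ g ∈ L, g ≠ 0 ∧ g ∈ (span ℝ S)ᗮ ∧ ‖g‖ < b := by
  obtain ⟨g, hg, hg0, hgcyl⟩ := exists_ne_zero_mem_of_covolume_mul_two_pow_lt_measureReal volume L
    (fun _ => neg_mem_orthogonalCylinder (span ℝ S)) (convex_orthogonalCylinder (span ℝ S)) <| by
      rwa [Measure.real, volume_orthogonalCylinder, ENNReal.toReal_mul]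
  obtain ⟨hga, hgb⟩ := (mem_orthogonalCylinder _).mp hgcyl
  have hperp : g ∈ (span ℝ S)ᗮ :=
    mem_orthogonal_span_of_inner_eq_mul_intCast (fun θ hθ => hint θ hθ g hg) hnorm hga
  exact ⟨g, hg, hg0, hperp, by rwa [norm_orthogonalProjectionOnto_apply _ hperp] at hgb⟩

theorem exists_lattice_vector_orthogonal_to_lattice_subspace_general (hE : 2 ≤ finrank ℝ E) {r : ℝ}
    (hnorm : ∀ θ ∈ S, ‖θ‖ ≤ r) (hint : ∀ θ ∈ S, ∀ g ∈ L, ∃ k : ℤ, ⟪θ, g⟫ = 2 * Real.pi * k)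
    (hdim : finrank ℝ (span ℝ S) = finrank ℝ E - 1) :
    ∃ g ∈ L, g ≠ 0 ∧ g ∈ (span ℝ S)ᗮ ∧
      ‖g‖ ≤ 2 * ZLattice.covolume L * (unitBallVol (finrank ℝ E - 1))⁻¹ *
        Real.pi ^ ((1 : ℤ) - (finrank ℝ E : ℤ)) * r ^ (finrank ℝ E - 1) := by
  obtain ⟨n, hn⟩ : ∃ n, finrank ℝ E = n + 1 := ⟨finrank ℝ E - 1, by lia⟩
  rw [hn, Nat.add_sub_cancel] at hdim ⊢
  have hr : 0 < r := pos_of_forall_norm_le_of_span_ne_bot hnorm <| by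
    rw [← one_le_finrank_iff, hdim]
    lia
  have hω := unitBallVol_pos n
  have hL := ZLattice.covolume_pos L
  have hpi : Real.pi ^ ((1 : ℤ) - ((n + 1 : ℕ) : ℤ)) = (Real.pi ^ n)⁻¹ := by
    rw [← zpow_natCast, ← zpow_neg, Nat.cast_succ, sub_add_cancel_right]
  rw [hpi]
  set b := 2 * ZLattice.covolume L * (unitBallVol n)⁻¹ * (Real.pi ^ n)⁻¹ * r ^ n with hb
  have hradius : ∀ θ ∈ S, ‖θ‖ * (2 * Real.pi / r) ≤ 2 * Real.pi := fun θ hθ =>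
    calc ‖θ‖ * (2 * Real.pi / r) ≤ r * (2 * Real.pi / r) := by gcongr; exact hnorm θ hθ
      _ = 2 * Real.pi := mul_div_cancel₀ _ hr.ne'
  have hcyl : (2 * Real.pi / r) ^ n * unitBallVol n * (2 * b) =
      2 * (ZLattice.covolume L * 2 ^ (n + 1)) := by
    rw [hb, div_pow, mul_pow]
    field_simp
    ring
  obtain ⟨g, hg, hg0, hperp, hlt⟩ :=
    exists_ne_zero_mem_orthogonal_span_norm_lt L (b := b) hint hradius <| by
      rw [volume_real_ball_mul_volume_real_ball_orthogonal_of_hyperplane (by rw [hdim, hn])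
        (by positivity) (by positivity), hdim, hn, hcyl]
      exact lt_two_mul_self (by positivity)
  exact ⟨g, hg, hg0, hperp, hlt.le⟩

end Lattice

section latticeOf

variable (B : Basis (Fin d) ℝ (EuclideanSpace ℝ (Fin d)))

instance : DiscreteTopology (latticeOf B) :=
  inferInstanceAs (DiscreteTopology (span ℤ (Set.range B)))

instance : IsZLattice ℝ (latticeOf B) :=
  inferInstanceAs (IsZLattice ℝ (span ℤ (Set.range B)))

lemma covolume_latticeOf : ZLattice.covolume (latticeOf B) = latDet B := by
  let e := EuclideanSpace.basisFun (Fin d) ℝ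
  have hunit : volume.real (ZSpan.fundamentalDomain e.toBasis) = 1 := by
    rw [measureReal_congr (ZSpan.fundamentalDomain_ae_parallelepiped _ volume), Measure.real,
      OrthonormalBasis.coe_toBasis, OrthonormalBasis.volume_parallelepiped, ENNReal.toReal_one]
  rw [ZLattice.covolume_eq_measure_fundamentalDomain (latticeOf B) volume
      (ZSpan.isAddFundamentalDomain' B volume),
    ZSpan.measureReal_fundamentalDomain B volume e.toBasis, hunit, mul_one, latDet]

end latticeOf

lemma projV_eq_zero_iff {V : Submodule ℝ (EuclideanSpace ℝ (Fin d))}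
    {ξ : EuclideanSpace ℝ (Fin d)} : projV V ξ = 0 ↔ ξ ∈ Vᗮ := by
  rw [projV, ZeroMemClass.coe_eq_zero]
  exact orthogonalProjectionOnto_eq_zero_iff

/-- Lemma 4.1(1): for any (d−1)-dimensional lattice r-subspace V there is a
nonzero lattice vector g ∈ Γ with g_V = 0 and |g| ≤ 2 d(Γ) ω_{d−1}⁻¹ π^{1−d} r^{d−1}. -/
theorem exists_lattice_vector_orthogonal_to_lattice_subspace
    (d : ℕ) (hd : 2 ≤ d) (B : Basis (Fin d) ℝ (EuclideanSpace ℝ (Fin d))) (r : ℝ)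
    (hr : Submodule.span ℝ (Theta0 B r) = ⊤)
    (V : Submodule ℝ (EuclideanSpace ℝ (Fin d)))
    (hV : IsLatticeSubspace B r V) (hdim : Module.finrank ℝ V = d - 1) :
    ∃ g : EuclideanSpace ℝ (Fin d), g ∈ latticeOf B ∧ g ≠ 0 ∧ projV V g = 0 ∧
      ‖g‖ ≤ 2 * latDet B * (unitBallVol (d - 1))⁻¹ * Real.pi ^ ((1 : ℤ) - (d : ℤ)) *
        r ^ (d - 1) := by
  obtain ⟨S, hS, rfl⟩ := hV
  simpa [covolume_latticeOf, projV_eq_zero_iff] using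
    exists_lattice_vector_orthogonal_to_lattice_subspace_general (latticeOf B) (by simpa using hd)
      (fun θ hθ => (hS hθ).2) (fun θ hθ => (hS hθ).1) (by simpa using hdim)
end
end

section
/- Let W ∈ 𝒱(r,n) with n ≤ d−1 be a lattice r-subspace and let ν ∈ Γ† with ν ∉ W. Then dist(ν, W) ≥ d(Γ)^{−1} ω_{d−1} π^d r^{1−d}. -/
noncomputable section

open Set Submodule Module MeasureTheory Relation
open scoped RealInnerProductSpace

variable {d : ℕ}

/-!
The parallelepiped spanned by a basis of dual lattice vectors has volume at least
`(2π) ^ d / d(Γ)`, since multiplying its determinant by that of `Γ` gives the nonzero determinant of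
a matrix with entries in `2πℤ`. Independent generators of `W` of length at most `r` and the vector
`ν` can be completed to such a basis by further dual lattice vectors of length at most `r`. The
parallelepiped on this basis has volume at most `dist(ν, W) * r ^ (d - 1)`: replacing `ν` by `ν - w`
with `w` in the span of the other vectors does not change the determinant, and Hadamard's inequality
applies. Hence the bound holds with `(2π) ^ d` in place of `ω_{d-1} π ^ d`, which is smaller because
the unit ball lies in a cube of side `2`.
-/

section LinearAlgebra

lemma alternatingMap_update_eq_zero_of_mem_span {ι R M N : Type*} [DecidableEq ι] [Semiring R]
    [AddCommMonoid M] [Module R M] [AddCommMonoid N] [Module R N] (f : M [⋀^ι]→ₗ[R] N)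
    (v : ι → M) {i : ι} {w : M} (hw : w ∈ span R (v '' {i}ᶜ)) :
    f (Function.update v i w) = 0 := by
  have hker : span R (v '' {i}ᶜ) ≤ LinearMap.ker (f.toMultilinearMap.toLinearMap v i) := by
    rw [span_le]
    rintro _ ⟨j, hj, rfl⟩
    exact f.map_update_self v (Ne.symm hj)
  exact hker hw

lemma alternatingMap_update_sub_of_mem_span {ι R M N : Type*} [DecidableEq ι] [Ring R]
    [AddCommGroup M] [Module R M] [AddCommGroup N] [Module R N] (f : M [⋀^ι]→ₗ[R] N)
    (v : ι → M) {i : ι} {w : M} (hw : w ∈ span R (v '' {i}ᶜ)) :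
    f (Function.update v i (v i - w)) = f v := by
  rw [f.map_update_sub, alternatingMap_update_eq_zero_of_mem_span f v hw,
    Function.update_eq_self, sub_zero]

lemma exists_basis_of_notMem_span {ι K V : Type*} [DivisionRing K] [AddCommGroup V] [Module K V]
    (b₀ : Basis ι K V) {S T : Set V} (hST : S ⊆ T) (hT : span K T = ⊤) {x : V}
    (hx : x ∉ span K S) :
    ∃ (b : Basis ι K V) (i : ι), b i = x ∧ (∀ j ≠ i, b j ∈ T) ∧ span K S ≤ span K (b '' {i}ᶜ) := by
  obtain ⟨S₀, hS₀S, hspan, hS₀⟩ := exists_linearIndependent K S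
  rw [← hspan] at hx ⊢
  have hins : LinearIndepOn K id (insert x S₀) := LinearIndepOn.id_insert hS₀ hx
  have hsub : insert x S₀ ⊆ insert x T := insert_subset_insert (hS₀S.trans hST)
  have htop : ⊤ ≤ span K (insert x T) := hT.ge.trans (span_mono (subset_insert x T))
  let c := Basis.extendLe hins hsub htop
  let b := c.reindex (c.indexEquiv b₀)
  have hrange : range b = range c := c.range_reindex _
  have hsubset : insert x S₀ ⊆ range b := hrange ▸ Basis.subset_extendLe hins hsub htop
  have hbT : range b ⊆ insert x T := hrange ▸ Basis.extendLe_subset hins hsub htop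
  obtain ⟨i, hi⟩ := hsubset (mem_insert x S₀)
  refine ⟨b, i, hi, fun j hj => ?_, span_mono fun y hy => ?_⟩
  · exact (hbT (mem_range_self j)).resolve_left fun h => hj (b.injective (h.trans hi.symm))
  · obtain ⟨j, rfl⟩ := hsubset (mem_insert_of_mem x hy)
    refine mem_image_of_mem b ?_
    rintro rfl
    exact hx (hi ▸ subset_span hy)

end LinearAlgebra

lemma pow_card_le_abs_det_of_forall_eq_mul_int {ι R : Type*} [Fintype ι] [DecidableEq ι]
    [CommRing R] [LinearOrder R] [IsStrictOrderedRing R] {A : Matrix ι ι R} {c : R}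
    (hA : ∀ i j, ∃ k : ℤ, A i j = c * k) (hdet : A.det ≠ 0) :
    |c| ^ Fintype.card ι ≤ |A.det| := by
  choose k hk using hA
  have hdet_eq : A.det = c ^ Fintype.card ι * ((Matrix.of k).det : R) := by
    have hA : A = c • (Matrix.of k).map (Int.cast : ℤ → R) := Matrix.ext hk
    rw [hA, Matrix.det_smul, Int.cast_det]
  have hk_ne : (Matrix.of k).det ≠ 0 := by
    intro h
    simp [hdet_eq, h] at hdet
  rw [hdet_eq, abs_mul, abs_pow]
  exact le_mul_of_one_le_right (by positivity) (mod_cast Int.one_le_abs hk_ne)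

section OrthonormalBasis

variable {ι E : Type*} [Fintype ι] [DecidableEq ι] [NormedAddCommGroup E] [InnerProductSpace ℝ E]

lemma det_mul_det_eq_det_inner (e : OrthonormalBasis ι ℝ E) (v w : ι → E) :
    e.toBasis.det v * e.toBasis.det w = (Matrix.of fun i j => ⟪v i, w j⟫).det := by
  rw [Basis.det_apply, Basis.det_apply, ← Matrix.det_transpose, ← Matrix.det_mul]
  congr 1
  ext i j
  simp [Matrix.mul_apply, Basis.toMatrix_apply, e.repr_apply_apply, real_inner_comm (v i),
    e.sum_inner_mul_inner]

lemma abs_det_le_prod_norm (e : OrthonormalBasis ι ℝ E) (v : ι → E) :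
    |e.toBasis.det v| ≤ ∏ i, ‖v i‖ := by
  have : Fact (finrank ℝ E = Fintype.card ι) := ⟨finrank_eq_card_basis e.toBasis⟩
  let σ := Fintype.equivFin ι
  let e' := e.reindex σ
  have h := e'.toBasis.orientation.abs_volumeForm_apply_le (v ∘ σ.symm)
  rw [Orientation.volumeForm_robust' _ e', e.reindex_toBasis, Basis.det_reindex] at h
  simpa [Function.comp_def, σ.symm.prod_comp fun i => ‖v i‖] using h

lemma abs_det_le_infDist_mul_prod_norm (e : OrthonormalBasis ι ℝ E) (v : ι → E) (i : ι) :
    |e.toBasis.det v| ≤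
      Metric.infDist (v i) (span ℝ (v '' {i}ᶜ)) * ∏ j ∈ Finset.univ.erase i, ‖v j‖ := by
  have : FiniteDimensional ℝ E := e.toBasis.finiteDimensional_of_finite
  obtain ⟨w, hw, hdist⟩ := (closed_of_finiteDimensional (span ℝ (v '' {i}ᶜ))).exists_infDist_eq_dist
    ⟨0, zero_mem _⟩ (v i)
  calc |e.toBasis.det v|
      = |e.toBasis.det (Function.update v i (v i - w))| := by
        rw [alternatingMap_update_sub_of_mem_span _ v hw]
    _ ≤ ∏ j, ‖Function.update v i (v i - w) j‖ := abs_det_le_prod_norm e _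
    _ = ‖v i - w‖ * ∏ j ∈ Finset.univ.erase i, ‖v j‖ := by
        rw [← Finset.mul_prod_erase _ _ (Finset.mem_univ i), Function.update_self]
        congr 1
        exact Finset.prod_congr rfl fun j hj => by
          rw [Function.update_of_ne (Finset.ne_of_mem_erase hj)]
    _ = _ := by rw [hdist, dist_eq_norm]

lemma abs_det_le_infDist_mul_pow (e : OrthonormalBasis ι ℝ E) (v : ι → E) {i : ι} {r : ℝ}
    (hr : ∀ j ≠ i, ‖v j‖ ≤ r) :
    |e.toBasis.det v| ≤
      Metric.infDist (v i) (span ℝ (v '' {i}ᶜ)) * r ^ (Fintype.card ι - 1) := by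
  have hprod : ∏ j ∈ Finset.univ.erase i, ‖v j‖ ≤ r ^ (Fintype.card ι - 1) :=
    calc ∏ j ∈ Finset.univ.erase i, ‖v j‖
        ≤ ∏ _j ∈ Finset.univ.erase i, r :=
          Finset.prod_le_prod (fun _ _ => norm_nonneg _) fun j hj =>
            hr j (Finset.ne_of_mem_erase hj)
      _ = r ^ (Fintype.card ι - 1) := by
          rw [Finset.prod_const, Finset.card_erase_of_mem (Finset.mem_univ i), Finset.card_univ]
  exact (abs_det_le_infDist_mul_prod_norm e v i).trans
    (mul_le_mul_of_nonneg_left hprod Metric.infDist_nonneg)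

end OrthonormalBasis

section DualLattice

variable {B : Basis (Fin d) ℝ (EuclideanSpace ℝ (Fin d))} {r : ℝ}

lemma two_pi_pow_le_abs_det_mul_latDet (b : Basis (Fin d) ℝ (EuclideanSpace ℝ (Fin d)))
    (hb : ∀ i, b i ∈ dualLattice B) :
    (2 * Real.pi) ^ d ≤ |(EuclideanSpace.basisFun (Fin d) ℝ).toBasis.det b| * latDet B := by
  let e := EuclideanSpace.basisFun (Fin d) ℝ
  let A := Matrix.of fun i j => ⟪b i, B j⟫
  have hA : e.toBasis.det b * e.toBasis.det B = A.det := det_mul_det_eq_det_inner e b B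
  have hdet : A.det ≠ 0 :=
    hA ▸ mul_ne_zero (e.toBasis.isUnit_det b).ne_zero (e.toBasis.isUnit_det B).ne_zero
  calc (2 * Real.pi) ^ d
      = |2 * Real.pi| ^ Fintype.card (Fin d) := by
        rw [abs_of_pos Real.two_pi_pos, Fintype.card_fin]
    _ ≤ |A.det| := pow_card_le_abs_det_of_forall_eq_mul_int
        (fun i j => hb i (B j) (subset_span (mem_range_self j))) hdet
    _ = |e.toBasis.det b| * latDet B := by rw [← hA, abs_mul, latDet]

lemma radius_nonneg_of_span_Theta0_eq_top [NeZero d] (hr : span ℝ (Theta0 B r) = ⊤) : 0 ≤ r := by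
  obtain ⟨θ, hθ⟩ : (Theta0 B r).Nonempty := by
    rw [nonempty_iff_ne_empty]
    intro hempty
    rw [hempty, span_empty] at hr
    exact bot_ne_top hr
  exact (norm_nonneg θ).trans hθ.2

theorem dist_dualLattice_latticeSubspace_lower_bound_general
    (hr : span ℝ (Theta0 B r) = ⊤) {W : Submodule ℝ (EuclideanSpace ℝ (Fin d))}
    (hW : IsLatticeSubspace B r W) {ν : EuclideanSpace ℝ (Fin d)} (hν : ν ∈ dualLattice B)
    (hνW : ν ∉ W) :
    (latDet B)⁻¹ * (2 * Real.pi) ^ d * r ^ ((1 : ℤ) - (d : ℤ)) ≤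
      Metric.infDist ν (W : Set (EuclideanSpace ℝ (Fin d))) := by
  obtain ⟨S, hS, rfl⟩ := hW
  obtain ⟨b, i, rfl, hb, hSb⟩ := exists_basis_of_notMem_span B hS hr hνW
  have : NeZero d := .of_pos i.pos
  have hr0 : 0 ≤ r := radius_nonneg_of_span_Theta0_eq_top hr
  have hlat : 0 ≤ latDet B := abs_nonneg _
  have hdual : ∀ j, b j ∈ dualLattice B := fun j => by
    obtain rfl | hj := eq_or_ne j i
    exacts [hν, (hb j hj).1]
  have hdist : Metric.infDist (b i) (span ℝ (b '' {i}ᶜ)) ≤ Metric.infDist (b i) (span ℝ S) :=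
    Metric.infDist_le_infDist_of_subset hSb ⟨0, zero_mem _⟩
  have hdet : |(EuclideanSpace.basisFun (Fin d) ℝ).toBasis.det b| ≤
      Metric.infDist (b i) (span ℝ (b '' {i}ᶜ)) * r ^ (d - 1) := by
    simpa only [Fintype.card_fin] using abs_det_le_infDist_mul_pow _ b fun j hj => (hb j hj).2
  have hvol : (2 * Real.pi) ^ d ≤
      Metric.infDist (b i) (span ℝ S) * (r ^ (d - 1) * latDet B) :=
    calc (2 * Real.pi) ^ d
        ≤ |(EuclideanSpace.basisFun (Fin d) ℝ).toBasis.det b| * latDet B :=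
          two_pi_pow_le_abs_det_mul_latDet b hdual
      _ ≤ Metric.infDist (b i) (span ℝ S) * r ^ (d - 1) * latDet B := by grw [hdet, hdist]
      _ = _ := mul_assoc _ _ _
  calc (latDet B)⁻¹ * (2 * Real.pi) ^ d * r ^ ((1 : ℤ) - (d : ℤ))
      = (2 * Real.pi) ^ d / (r ^ (d - 1) * latDet B) := by
        rw [← neg_sub, zpow_neg, ← Nat.cast_pred i.pos, zpow_natCast]
        ring
    _ ≤ _ := div_le_of_le_mul₀ (by positivity) Metric.infDist_nonneg hvol

end DualLattice

lemma unitBallVol_le_two_pow (n : ℕ) : unitBallVol n ≤ 2 ^ n := by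
  have hcube : Metric.ball (0 : EuclideanSpace ℝ (Fin n)) 1 ⊆
      WithLp.ofLp ⁻¹' Metric.ball (0 : Fin n → ℝ) 1 := by
    intro x hx
    rw [mem_ball_zero_iff] at hx
    rw [mem_preimage, mem_ball_zero_iff, pi_norm_lt_iff one_pos]
    exact fun i => (PiLp.norm_apply_le x i).trans_lt hx
  refine ENNReal.toReal_le_of_le_ofReal (by positivity) ?_
  calc volume (Metric.ball (0 : EuclideanSpace ℝ (Fin n)) 1)
      ≤ volume (WithLp.ofLp ⁻¹' Metric.ball (0 : Fin n → ℝ) 1) := measure_mono hcube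
    _ = volume (Metric.ball (0 : Fin n → ℝ) 1) :=
        (PiLp.volume_preserving_ofLp (Fin n)).measure_preimage measurableSet_ball.nullMeasurableSet
    _ = ENNReal.ofReal (2 ^ n) := by simp [Real.volume_pi_ball]

lemma inv_latDet_mul_unitBallVol_mul_pi_pow_mul_zpow_le
    (B : Basis (Fin d) ℝ (EuclideanSpace ℝ (Fin d))) {r : ℝ} (hr : 0 ≤ r) (m : ℤ) :
    (latDet B)⁻¹ * unitBallVol (d - 1) * Real.pi ^ d * r ^ m ≤
      (latDet B)⁻¹ * (2 * Real.pi) ^ d * r ^ m := by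
  have hlat : 0 ≤ latDet B := abs_nonneg _
  have hball : unitBallVol (d - 1) ≤ 2 ^ d :=
    (unitBallVol_le_two_pow _).trans (pow_le_pow_right₀ one_le_two (Nat.sub_le d 1))
  rw [mul_pow, ← mul_assoc]
  gcongr

/-- Lemma 4.1(2): for any lattice r-subspace W of dimension n ≤ d−1 and any
dual lattice vector ν ∉ W, dist(ν, W) ≥ d(Γ)⁻¹ ω_{d−1} π^d r^{1−d}. -/
theorem dist_dualLattice_latticeSubspace_lower_bound
    (d n : ℕ) (hd : 2 ≤ d) (hn : n ≤ d - 1)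
    (B : Basis (Fin d) ℝ (EuclideanSpace ℝ (Fin d))) (r : ℝ)
    (hr : Submodule.span ℝ (Theta0 B r) = ⊤)
    (W : Submodule ℝ (EuclideanSpace ℝ (Fin d)))
    (hW : IsLatticeSubspace B r W) (hdim : Module.finrank ℝ W = n)
    (ν : EuclideanSpace ℝ (Fin d)) (hν : ν ∈ dualLattice B) (hνW : ν ∉ W) :
    (latDet B)⁻¹ * unitBallVol (d - 1) * Real.pi ^ d * r ^ ((1 : ℤ) - (d : ℤ)) ≤
      Metric.infDist ν (W : Set (EuclideanSpace ℝ (Fin d))) := by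
  have : NeZero d := ⟨by lia⟩
  exact (inv_latDet_mul_unitBallVol_mul_pi_pow_mul_zpow_le B
    (radius_nonneg_of_span_Theta0_eq_top hr) _).trans
    (dist_dualLattice_latticeSubspace_lower_bound_general hr hW hν hνW)
end
end

section
/- There is a constant C > 0, depending only on d and Γ, such that: for every m ≤ d−1, every lattice r-subspace V ∈ 𝒱(r,m), every θ ∈ Θ_r with θ ∉ V, and every ξ ∈ V + ℝθ, one has |ξ| ≤ C r^d (|ξ_θ| + |ξ_V|). -/
noncomputable section

open Set Submodule Module MeasureTheory Relation
open scoped RealInnerProductSpace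

variable {d : ℕ}

/-!
Let `u₁, …, uₘ ∈ Γ†` be a basis of `V` of vectors of length at most `r`. Pairing `θ, u₁, …, uₘ`
with the basis `B` of `Γ` gives `2π` times an integer matrix of full row rank, so some maximal minor
is at least `(2π) ^ (m + 1)` in absolute value. That minor is unchanged when `θ` is replaced by
`e := θ - θ_V`, and is then `O(‖e‖ r ^ m)`; hence `‖e‖ ≥ c r ^ (-m)`. On the other hand
`ξ - ξ_V = t e` and `⟪t e, θ⟫ = ⟪ξ_θ - ξ_V, θ⟫`, which gives `‖e‖ ‖ξ‖ ≤ 2 ‖θ‖ (‖ξ_θ‖ + ‖ξ_V‖)`.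
The exponent `m + 1` is raised to `d` using that nonzero dual lattice vectors are bounded away from
zero.
-/

section Determinants

variable {ι : Type*} [Fintype ι] [DecidableEq ι]

lemma exists_det_submatrix_ne_zero {K κ : Type*} [Field K] [Finite κ] {A : Matrix ι κ K}
    (hA : LinearIndependent K A.row) : ∃ J : ι → κ, (A.submatrix id J).det ≠ 0 := by
  have := Fintype.ofFinite κ
  have hcols : span K (range A.col) = ⊤ := by
    refine eq_top_of_finrank_eq ?_
    rw [← A.rank_eq_finrank_span_cols, hA.rank_matrix, finrank_fintype_fun_eq_card]
  obtain ⟨κ', a, -, hspan, hli⟩ := exists_linearIndependent' K A.col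
  let e : ι ≃ κ' := (Pi.basisFun K ι).indexEquiv (Basis.mk hli (hspan.trans hcols).ge)
  have hli' : LinearIndependent K (A.submatrix id (a ∘ e)).col := hli.comp e e.injective
  refine ⟨a ∘ e, IsUnit.ne_zero ?_⟩
  rwa [← Matrix.isUnit_iff_isUnit_det, ← Matrix.linearIndependent_cols_iff_isUnit]

lemma abs_det_le_factorial_mul_prod {A : Matrix ι ι ℝ} {c : ι → ℝ} (hA : ∀ i j, |A i j| ≤ c i) :
    |A.det| ≤ (Fintype.card ι).factorial * ∏ i, c i := by
  have hc : ∀ i, 0 ≤ c i := fun i => (abs_nonneg _).trans (hA i i)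
  -- A row with `c i = 0` vanishes, so it is recovered from its junk quotient as well.
  have hscale : A = Matrix.of fun i j => c i * (A i j / c i) := by
    ext i j
    exact (mul_div_cancel_of_imp' fun h => abs_nonpos_iff.1 (h ▸ hA i j)).symm
  have hunit : |(Matrix.of fun i j => A i j / c i).det| ≤ (Fintype.card ι).factorial := by
    have hentry : ∀ i j, |A i j / c i| ≤ 1 := fun i j => by
      rw [abs_div, abs_of_nonneg (hc i)]
      exact div_le_one_of_le₀ (hA i j) (hc i)
    simpa using Matrix.det_le (A := Matrix.of fun i j => A i j / c i) (abv := AbsoluteValue.abs)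
      hentry
  calc |A.det| = (∏ i, c i) * |(Matrix.of fun i j => A i j / c i).det| := by
        conv_lhs => rw [hscale]
        rw [← abs_of_nonneg (Finset.prod_nonneg fun i _ => hc i), ← abs_mul]
        exact congrArg abs (Matrix.det_mul_column c _)
    _ ≤ (∏ i, c i) * (Fintype.card ι).factorial :=
        mul_le_mul_of_nonneg_left hunit (Finset.prod_nonneg fun i _ => hc i)
    _ = _ := mul_comm _ _

lemma abs_pow_card_le_abs_det {A : Matrix ι ι ℝ} {a : ℝ} (hA : ∀ i j, ∃ k : ℤ, A i j = a * k)
    (hdet : A.det ≠ 0) : |a| ^ Fintype.card ι ≤ |A.det| := by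
  choose k hk using hA
  have hdet_eq : A.det = a ^ Fintype.card ι * ((Matrix.of k).det : ℤ) := by
    have hAk : A = a • (Matrix.of k).map (Int.cast : ℤ → ℝ) := by
      ext i j
      simp [hk]
    rw [hAk, Matrix.det_smul, Int.cast_det]
  rw [hdet_eq] at hdet ⊢
  have hone : (1 : ℝ) ≤ |((Matrix.of k).det : ℝ)| := by
    exact_mod_cast Int.one_le_abs (Int.cast_ne_zero.1 (right_ne_zero_of_mul hdet))
  rw [abs_mul, abs_pow]
  exact le_mul_of_one_le_right (by positivity) hone

end Determinants

lemma alternatingMap_cons_sub_of_mem_span {R M N : Type*} [CommRing R] [AddCommGroup M] [Module R M]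
    [AddCommGroup N] [Module R N] {n : ℕ} (f : M [⋀^Fin (n + 1)]→ₗ[R] N) {u : Fin n → M} {v : M}
    (hv : v ∈ span R (range u)) (x : M) :
    f (Fin.cons (x - v) u) = f (Fin.cons x u) := by
  let g : M →ₗ[R] N := f.toMultilinearMap.toLinearMap (Fin.cons x u) 0
  have hg : ∀ y, g y = f (Fin.cons y u) := fun y => by
    simp [g]
  have hker : span R (range u) ≤ LinearMap.ker g := by
    refine span_le.2 ?_
    rintro _ ⟨i, rfl⟩
    rw [SetLike.mem_coe, LinearMap.mem_ker, hg]
    exact f.map_eq_zero_of_eq _ (i := 0) (j := i.succ) (by simp) (Fin.succ_ne_zero i).symm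
  have hgv : g v = 0 := hker hv
  rw [← hg, ← hg, map_sub, hgv, sub_zero]

section InnerProductSpace

variable {E ι κ : Type*} [NormedAddCommGroup E] [InnerProductSpace ℝ E] [Fintype ι] [DecidableEq ι]

/-- The mixed Gram determinant `det ⟪x i, y j⟫`, as an alternating map in `x`; it transfers
determinant estimates to vectors of an inner product space. -/
def innerDet (y : ι → E) : E [⋀^ι]→ₗ[ℝ] ℝ :=
  Matrix.detRowAlternating.compLinearMap (LinearMap.pi fun j => (innerₗ E).flip (y j))

lemma abs_innerDet_le (y x : ι → E) :
    |innerDet y x| ≤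
      (Fintype.card ι).factorial * ‖y‖ ^ Fintype.card ι * ∏ i, ‖x i‖ := by
  have hentry : ∀ i j, |⟪x i, y j⟫| ≤ ‖y‖ * ‖x i‖ := fun i j =>
    calc |⟪x i, y j⟫| ≤ ‖x i‖ * ‖y j‖ := abs_real_inner_le_norm _ _
      _ ≤ ‖x i‖ * ‖y‖ := by gcongr; exact norm_le_pi_norm y j
      _ = ‖y‖ * ‖x i‖ := mul_comm _ _
  calc |innerDet y x| ≤ (Fintype.card ι).factorial * ∏ i, ‖y‖ * ‖x i‖ :=
        abs_det_le_factorial_mul_prod hentry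
    _ = _ := by rw [Finset.prod_mul_distrib, Finset.prod_const, Finset.card_univ, mul_assoc]

lemma exists_innerDet_comp_ne_zero [Finite κ] {b : κ → E} (hb : span ℝ (range b) = ⊤) {x : ι → E}
    (hx : LinearIndependent ℝ x) : ∃ J : ι → κ, innerDet (b ∘ J) x ≠ 0 := by
  let pairing : E →ₗ[ℝ] κ → ℝ := LinearMap.pi fun k => (innerₗ E).flip (b k)
  have hpairing : LinearMap.ker pairing = ⊥ := by
    refine LinearMap.ker_eq_bot'.2 fun y hy => ?_
    have horth : span ℝ (range b) ≤ LinearMap.ker (innerₗ E y) :=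
      span_le.2 (range_subset_iff.2 fun k => congrFun hy k)
    have hyy : ⟪y, y⟫ = 0 := horth (hb ▸ mem_top)
    exact inner_self_eq_zero.1 hyy
  exact exists_det_submatrix_ne_zero (A := Matrix.of (pairing ∘ x)) (hx.map' pairing hpairing)

lemma abs_pow_succ_le_norm_sub_mul_prod [Fintype κ] {b : κ → E} (hb : span ℝ (range b) = ⊤) {n : ℕ}
    {u : Fin n → E} (hu : LinearIndependent ℝ u) {x v : E} (hx : x ∉ span ℝ (range u))
    (hv : v ∈ span ℝ (range u)) {a : ℝ} (hua : ∀ i k, ∃ z : ℤ, ⟪u i, b k⟫ = a * z)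
    (hxa : ∀ k, ∃ z : ℤ, ⟪x, b k⟫ = a * z) :
    |a| ^ (n + 1) ≤ (n + 1).factorial * ‖b‖ ^ (n + 1) * (‖x - v‖ * ∏ i, ‖u i‖) := by
  obtain ⟨J, hJ⟩ := exists_innerDet_comp_ne_zero hb (linearIndependent_finCons.2 ⟨hu, hx⟩)
  have hint : ∀ i j, ∃ z : ℤ, ⟪(Fin.cons x u : Fin (n + 1) → E) i, b (J j)⟫ = a * z := fun i j =>
    Fin.cases (hxa (J j)) (fun i => hua i (J j)) i
  have hbJ : ‖b ∘ J‖ ≤ ‖b‖ := (pi_norm_le_iff_of_nonneg (norm_nonneg b)).2 fun j =>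
    norm_le_pi_norm b (J j)
  have hminor : |a| ^ Fintype.card (Fin (n + 1)) ≤ |innerDet (b ∘ J) (Fin.cons x u)| :=
    abs_pow_card_le_abs_det hint hJ
  calc |a| ^ (n + 1) ≤ |innerDet (b ∘ J) (Fin.cons x u)| := by rwa [Fintype.card_fin] at hminor
    _ = |innerDet (b ∘ J) (Fin.cons (x - v) u)| := by
        rw [alternatingMap_cons_sub_of_mem_span _ hv]
    _ ≤ (n + 1).factorial * ‖b ∘ J‖ ^ (n + 1) * (‖x - v‖ * ∏ i, ‖u i‖) := by
        simpa only [Fintype.card_fin, Fin.prod_univ_succ, Fin.cons_zero, Fin.cons_succ] using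
          abs_innerDet_le (b ∘ J) (Fin.cons (x - v) u)
    _ ≤ _ := by gcongr

end InnerProductSpace

section Projection

variable {E : Type*} [NormedAddCommGroup E] [InnerProductSpace ℝ E]

lemma norm_sub_starProjection_mul_norm_sub_starProjection (V : Submodule ℝ E)
    [V.HasOrthogonalProjection] {θ ξ : E} (hξ : ξ ∈ V ⊔ span ℝ {θ}) :
    ‖θ - V.starProjection θ‖ * ‖ξ - V.starProjection ξ‖ = |⟪ξ - V.starProjection ξ, θ⟫| := by
  obtain ⟨v, hv, w, hw, rfl⟩ := mem_sup.1 hξ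
  obtain ⟨t, rfl⟩ := mem_span_singleton.1 hw
  set e := θ - V.starProjection θ with he
  have hmultiple : v + t • θ - V.starProjection (v + t • θ) = t • e := by
    rw [map_add, map_smul, V.starProjection_eq_self_iff.2 hv, he]
    module
  have hinner : ⟪e, θ⟫ = ‖e‖ ^ 2 := by
    have horth : ⟪e, V.starProjection θ⟫ = 0 :=
      inner_left_of_mem_orthogonal (V.starProjection_apply_mem θ)
        (V.sub_starProjection_mem_orthogonal θ)
    rw [← real_inner_self_eq_norm_sq, ← sub_zero ⟪e, θ⟫, ← horth, ← inner_sub_right]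
  rw [hmultiple, real_inner_smul_left, hinner, norm_smul, Real.norm_eq_abs, abs_mul,
    abs_of_nonneg (sq_nonneg ‖e‖)]
  ring

lemma abs_inner_le_norm_starProjection_span_mul (θ ξ : E) :
    |⟪ξ, θ⟫| ≤ ‖(span ℝ {θ}).starProjection ξ‖ * ‖θ‖ := by
  have hθ : (span ℝ {θ}).starProjection θ = θ :=
    starProjection_eq_self_iff.2 (mem_span_singleton_self θ)
  calc |⟪ξ, θ⟫| = |⟪(span ℝ {θ}).starProjection ξ, θ⟫| := by
        rw [inner_starProjection_left_eq_right, hθ]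
    _ ≤ _ := abs_real_inner_le_norm _ _

lemma norm_sub_starProjection_mul_norm_le (V : Submodule ℝ E) [V.HasOrthogonalProjection] {θ ξ : E}
    (hξ : ξ ∈ V ⊔ span ℝ {θ}) :
    ‖θ - V.starProjection θ‖ * ‖ξ‖ ≤
      2 * ‖θ‖ * (‖(span ℝ {θ}).starProjection ξ‖ + ‖V.starProjection ξ‖) := by
  have hproj : ‖θ - V.starProjection θ‖ ≤ ‖θ‖ := by
    rw [← V.starProjection_orthogonal_val]
    exact Vᗮ.norm_starProjection_apply_le θ
  set e := θ - V.starProjection θ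
  set p := V.starProjection ξ
  set q := (span ℝ {θ}).starProjection ξ
  calc ‖e‖ * ‖ξ‖ ≤ ‖e‖ * (‖p‖ + ‖ξ - p‖) := by
        gcongr
        exact norm_le_norm_add_norm_sub' ξ p
    _ = ‖e‖ * ‖p‖ + |⟪ξ, θ⟫ - ⟪p, θ⟫| := by
        rw [mul_add, norm_sub_starProjection_mul_norm_sub_starProjection V hξ, inner_sub_left]
    _ ≤ ‖θ‖ * ‖p‖ + (‖q‖ * ‖θ‖ + ‖p‖ * ‖θ‖) := by
        gcongr
        exact (abs_sub _ _).trans (add_le_add (abs_inner_le_norm_starProjection_span_mul θ ξ)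
          (abs_real_inner_le_norm p θ))
    _ ≤ 2 * ‖θ‖ * (‖q‖ + ‖p‖) := by linarith [mul_nonneg (norm_nonneg θ) (norm_nonneg q)]

end Projection

section LatticeSubspaces

variable {B : Basis (Fin d) ℝ (EuclideanSpace ℝ (Fin d))}

lemma two_pi_pow_le_mul_norm_sub {r : ℝ} {V : Submodule ℝ (EuclideanSpace ℝ (Fin d))}
    (hV : IsLatticeSubspace B r V) {θ v : EuclideanSpace ℝ (Fin d)} (hθ : θ ∈ dualLattice B)
    (hθV : θ ∉ V) (hv : v ∈ V) :
    (2 * Real.pi) ^ (finrank ℝ V + 1) ≤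
      (finrank ℝ V + 1).factorial * ‖⇑B‖ ^ (finrank ℝ V + 1) * (‖θ - v‖ * r ^ finrank ℝ V) := by
  obtain ⟨S, hS, rfl⟩ := hV
  obtain ⟨u, huS, hspan, hu⟩ := exists_fun_fin_finrank_span_eq ℝ S
  have hpair : ∀ x ∈ dualLattice B, ∀ j, ∃ k : ℤ, ⟪x, B j⟫ = 2 * Real.pi * k := fun x hx j =>
    hx (B j) (subset_span (mem_range_self j))
  have hprod : ∏ i, ‖u i‖ ≤ r ^ finrank ℝ (span ℝ S) := by
    simpa using Finset.prod_le_prod (s := Finset.univ) (fun i _ => norm_nonneg (u i))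
      fun i _ => (hS (huS i)).2
  calc (2 * Real.pi) ^ (finrank ℝ (span ℝ S) + 1)
      = |2 * Real.pi| ^ (finrank ℝ (span ℝ S) + 1) := by rw [abs_of_pos Real.two_pi_pos]
    _ ≤ _ := abs_pow_succ_le_norm_sub_mul_prod B.span_eq hu (by rwa [hspan])
        (by rwa [hspan]) (fun i => hpair _ (hS (huS i)).1) (hpair θ hθ)
    _ ≤ _ := by gcongr

lemma two_pi_le_mul_norm {θ : EuclideanSpace ℝ (Fin d)} (hθ : θ ∈ dualLattice B) (hθ₀ : θ ≠ 0) :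
    2 * Real.pi ≤ ‖⇑B‖ * ‖θ‖ := by
  have hbot : IsLatticeSubspace B 0 ⊥ := ⟨∅, empty_subset _, span_empty.symm⟩
  simpa using two_pi_pow_le_mul_norm_sub hbot hθ (by simpa using hθ₀) (zero_mem ⊥)

lemma norm_le_factorial_mul_pow_finrank_mul {r : ℝ} {V : Submodule ℝ (EuclideanSpace ℝ (Fin d))}
    (hV : IsLatticeSubspace B r V) {θ ξ : EuclideanSpace ℝ (Fin d)} (hθ : θ ∈ Theta B r)
    (hθV : θ ∉ V) (hξ : ξ ∈ V ⊔ span ℝ {θ}) :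
    ‖ξ‖ ≤ 2 * (finrank ℝ V + 1).factorial * (‖⇑B‖ * r / (2 * Real.pi)) ^ (finrank ℝ V + 1) *
      (‖projV (span ℝ {θ}) ξ‖ + ‖projV V ξ‖) := by
  obtain ⟨hθB, -, hθr⟩ := hθ
  have hdist := two_pi_pow_le_mul_norm_sub hV hθB hθV (V.starProjection_apply_mem θ)
  have hangle : ‖θ - V.starProjection θ‖ * ‖ξ‖ ≤
      2 * ‖θ‖ * (‖projV (span ℝ {θ}) ξ‖ + ‖projV V ξ‖) := norm_sub_starProjection_mul_norm_le V hξ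
  have hr : 0 ≤ r := (norm_nonneg θ).trans hθr
  set e := θ - V.starProjection θ
  set m := finrank ℝ V
  set s := ‖projV (span ℝ {θ}) ξ‖ + ‖projV V ξ‖
  rw [div_pow, mul_div_assoc', div_mul_eq_mul_div, le_div_iff₀ (by positivity)]
  calc ‖ξ‖ * (2 * Real.pi) ^ (m + 1)
      ≤ ‖ξ‖ * ((m + 1).factorial * ‖⇑B‖ ^ (m + 1) * (‖e‖ * r ^ m)) := by gcongr
    _ = (m + 1).factorial * ‖⇑B‖ ^ (m + 1) * r ^ m * (‖e‖ * ‖ξ‖) := by ring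
    _ ≤ (m + 1).factorial * ‖⇑B‖ ^ (m + 1) * r ^ m * (2 * ‖θ‖ * s) := by gcongr
    _ ≤ (m + 1).factorial * ‖⇑B‖ ^ (m + 1) * r ^ m * (2 * r * s) := by gcongr
    _ = _ := by ring

end LatticeSubspaces

theorem norm_le_of_mem_sup_span_general (B : Basis (Fin d) ℝ (EuclideanSpace ℝ (Fin d))) :
    ∃ C : ℝ, 0 < C ∧ ∀ r : ℝ, ∀ V : Submodule ℝ (EuclideanSpace ℝ (Fin d)),
      IsLatticeSubspace B r V → ∀ θ ∈ Theta B r, θ ∉ V → ∀ ξ ∈ V ⊔ span ℝ {θ},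
        ‖ξ‖ ≤ C * r ^ d * (‖projV (span ℝ {θ}) ξ‖ + ‖projV V ξ‖) := by
  have hB : 0 < ‖⇑B‖ ^ d := by
    rcases d.eq_zero_or_pos with rfl | hd
    · simp
    · exact pow_pos (norm_pos_iff.2 fun h => B.ne_zero ⟨0, hd⟩ (congrFun h ⟨0, hd⟩)) _
  refine ⟨2 * d.factorial * (‖⇑B‖ ^ d / (2 * Real.pi) ^ d), by positivity, ?_⟩
  intro r V hV θ hθ hθV ξ hξ
  have hdim : finrank ℝ V + 1 ≤ d := by
    have hlt := finrank_lt fun hV' : V = ⊤ => hθV (hV' ▸ mem_top)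
    rwa [finrank_euclideanSpace_fin] at hlt
  have hone : 1 ≤ ‖⇑B‖ * r / (2 * Real.pi) := by
    rw [one_le_div Real.two_pi_pos]
    exact (two_pi_le_mul_norm hθ.1 hθ.2.1).trans (by gcongr; exact hθ.2.2)
  calc ‖ξ‖ ≤ _ := norm_le_factorial_mul_pow_finrank_mul hV hθ hθV hξ
    _ ≤ 2 * d.factorial * (‖⇑B‖ * r / (2 * Real.pi)) ^ d *
        (‖projV (span ℝ {θ}) ξ‖ + ‖projV V ξ‖) := by gcongr
    _ = _ := by rw [div_pow, mul_pow]; ring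

/-- Lemma 4.2(1): there is C = C(d,Γ) > 0 such that for every lattice
r-subspace V of dimension m ≤ d−1, every θ ∈ Θ_r with θ ∉ V, and every ξ ∈ V + ℝθ,
|ξ| ≤ C r^d (|ξ_θ| + |ξ_V|). -/
theorem norm_le_of_mem_sup_span
    (d : ℕ) (hd : 2 ≤ d) (B : Basis (Fin d) ℝ (EuclideanSpace ℝ (Fin d))) :
    ∃ C : ℝ, 0 < C ∧ ∀ r : ℝ, Submodule.span ℝ (Theta0 B r) = ⊤ →
      ∀ m : ℕ, m ≤ d - 1 →
      ∀ V : Submodule ℝ (EuclideanSpace ℝ (Fin d)), IsLatticeSubspace B r V →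
        Module.finrank ℝ V = m →
      ∀ θ ∈ Theta B r, θ ∉ V →
      ∀ ξ ∈ V ⊔ Submodule.span ℝ {θ},
        ‖ξ‖ ≤ C * r ^ d * (‖projV (Submodule.span ℝ {θ}) ξ‖ + ‖projV V ξ‖) := by
  obtain ⟨C, hC, hbound⟩ := norm_le_of_mem_sup_span_general B
  exact ⟨C, hC, fun r _ _ _ V hV _ => hbound r V hV⟩
end
end

section
/- There is a constant C > 0, depending only on d and Γ, such that: for every m ≤ d−1 and n ≤ d−1, every pair of lattice r-subspaces V ∈ 𝒱(r,m) and W ∈ 𝒱(r,n), and every ξ ∈ ℝ^d, one has |ξ_{V+W}| ≤ C r^{nd} (|ξ_V| + |ξ_W|). -/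
noncomputable section

open Set Submodule Module MeasureTheory Relation
open scoped RealInnerProductSpace

variable {d : ℕ}

/-!
On vectors of a lattice with basis `b`, the form `b.det` takes integer values, so a basis `f` of
the space made of lattice vectors has `|b.det f| ≥ 1`. By Cramer's rule the components of any `x`
along the lines `ℝ (f i)` then have norm at most a constant times `‖x‖ ∏ ‖f j‖`. If `V` and `W`
are spanned by lattice vectors of norm at most `r`, choose `f` adapted to `V` and `V + W`, filled
up by vectors of `b`: every `x ∈ V + W` splits as `v + w` with `v ∈ V`, `w ∈ W` and `‖v‖, ‖w‖ ≤ C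
r^{dim(V+W)} ‖x‖`. Applied to `x = ξ_{V+W}`, the identity `‖x‖² = ⟪ξ, v⟫ + ⟪ξ, w⟫` bounds the
projection. If `W ≠ 0`, the same bound for the line of a lattice vector `θ ∈ W` and `ξ = θ` gives
`1 ≤ C r`, so the exponent can be raised to `dim W * d`.
-/

section OrthogonalProjection

variable {𝕜 E : Type*} [RCLike 𝕜] [NormedAddCommGroup E] [InnerProductSpace 𝕜 E]

lemma norm_inner_le_norm_mul_norm_starProjection {V : Submodule 𝕜 E} [V.HasOrthogonalProjection]
    {v : E} (hv : v ∈ V) (ξ : E) : ‖inner 𝕜 v ξ‖ ≤ ‖v‖ * ‖V.starProjection ξ‖ := by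
  rw [← starProjection_eq_self_iff.2 hv, inner_starProjection_left_eq_right,
    starProjection_eq_self_iff.2 hv]
  exact norm_inner_le_norm _ _

lemma norm_starProjection_le_of_forall_exists_add {U V W : Submodule 𝕜 E}
    [U.HasOrthogonalProjection] [V.HasOrthogonalProjection] [W.HasOrthogonalProjection] {K : ℝ}
    (hK : 0 ≤ K)
    (hU : ∀ x ∈ U, ∃ v ∈ V, ∃ w ∈ W, v + w = x ∧ ‖v‖ ≤ K * ‖x‖ ∧ ‖w‖ ≤ K * ‖x‖) (ξ : E) :
    ‖U.starProjection ξ‖ ≤ K * (‖V.starProjection ξ‖ + ‖W.starProjection ξ‖) := by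
  set x := U.starProjection ξ with hx
  have hxU : x ∈ U := U.starProjection_apply_mem ξ
  obtain ⟨v, hv, w, hw, hvw, hvx, hwx⟩ := hU x hxU
  have hinner : inner 𝕜 x x = inner 𝕜 v ξ + inner 𝕜 w ξ := by
    rw [← inner_add_left, hvw]
    conv_lhs => rw [hx, ← inner_starProjection_left_eq_right, starProjection_eq_self_iff.2 hxU]
  rcases (norm_nonneg x).eq_or_lt with hx0 | hx0
  · rw [← hx0]
    positivity
  refine le_of_mul_le_mul_left ?_ hx0
  calc ‖x‖ * ‖x‖ = ‖inner 𝕜 v ξ + inner 𝕜 w ξ‖ := by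
        rw [← hinner, inner_self_eq_norm_sq_to_K, norm_pow, RCLike.norm_ofReal, abs_norm, sq]
    _ ≤ ‖v‖ * ‖V.starProjection ξ‖ + ‖w‖ * ‖W.starProjection ξ‖ :=
        norm_add_le_of_le (norm_inner_le_norm_mul_norm_starProjection hv ξ)
          (norm_inner_le_norm_mul_norm_starProjection hw ξ)
    _ ≤ K * ‖x‖ * ‖V.starProjection ξ‖ + K * ‖x‖ * ‖W.starProjection ξ‖ := by gcongr
    _ = ‖x‖ * (K * (‖V.starProjection ξ‖ + ‖W.starProjection ξ‖)) := by ring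

end OrthogonalProjection

lemma coord_mul_det_eq_det_update {R M ι : Type*} [CommRing R] [AddCommGroup M] [Module R M]
    [Fintype ι] [DecidableEq ι] (b f : Basis ι R M) (x : M) (i : ι) :
    f.coord i x * b.det f = b.det (Function.update f i x) := by
  have hf : Basis.mk f.linearIndependent f.span_eq.ge = f := Basis.eq_of_apply_eq (by simp)
  have h := LinearMap.congr_fun
    (b.det_smul_mk_coord_eq_det_update f.linearIndependent f.span_eq.ge i) x
  rw [hf] at h
  simpa [mul_comm] using h

lemma one_le_abs_det_of_forall_mem_span_int {R M ι : Type*} [CommRing R] [LinearOrder R]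
    [IsStrictOrderedRing R] [AddCommGroup M] [Module R M] [Fintype ι] [DecidableEq ι]
    (b f : Basis ι R M) (hf : ∀ i, f i ∈ span ℤ (range b)) : 1 ≤ |b.det f| := by
  have hint (i j : ι) : ∃ k : ℤ, (k : R) = b.repr (f j) i :=
    (b.mem_span_iff_repr_mem ℤ _).1 (hf j) i
  choose A hA using hint
  have hdet : b.det f = ((Matrix.of A).det : ℤ) := by
    rw [b.det_apply, Int.cast_det]
    congr 1
    ext i j
    simp [hA, b.toMatrix_apply]
  have hne : b.det f ≠ 0 := (b.isUnit_det f).ne_zero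
  rw [hdet] at hne ⊢
  exact_mod_cast Int.one_le_abs (Int.cast_ne_zero.1 hne)

lemma exists_norm_coord_smul_le {E ι : Type*} [NormedAddCommGroup E] [NormedSpace ℝ E] [Fintype ι]
    (b : Basis ι ℝ E) :
    ∃ M : ℝ, 0 < M ∧ ∀ f : Basis ι ℝ E, (∀ i, f i ∈ span ℤ (range b)) →
      ∀ i x, ‖f.coord i x • f i‖ ≤ M * (‖x‖ * ∏ j, ‖f j‖) := by
  classical
  have : FiniteDimensional ℝ E := b.finiteDimensional_of_finite
  have hcont : Continuous b.det := by
    simp only [funext b.det_apply]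
    exact Continuous.matrix_det <| continuous_matrix fun i j =>
      (b.coord i).continuous_of_finiteDimensional.comp (continuous_apply j)
  obtain ⟨M, hM, hbound⟩ := b.det.exists_bound_of_continuous hcont
  refine ⟨M, hM, fun f hf i x => ?_⟩
  calc ‖f.coord i x • f i‖
      ≤ ‖f.coord i x * b.det f‖ * ‖f i‖ := by
        rw [norm_smul, norm_mul]
        gcongr
        exact le_mul_of_one_le_right (norm_nonneg _) (one_le_abs_det_of_forall_mem_span_int b f hf)
    _ ≤ M * (∏ j, ‖Function.update f i x j‖) * ‖f i‖ := by
        rw [coord_mul_det_eq_det_update]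
        gcongr
        exact hbound _
    _ = M * (‖x‖ * ∏ j, ‖f j‖) := by
        rw [← Finset.mul_prod_erase _ _ (Finset.mem_univ i),
          ← Finset.mul_prod_erase _ (fun j => ‖f j‖) (Finset.mem_univ i), Function.update_self,
          Finset.prod_congr rfl fun j hj => by
            rw [Function.update_of_ne (Finset.ne_of_mem_erase hj)]]
        ring

lemma exists_basis_image_subset_span_eq {K M ι : Type*} [DivisionRing K] [AddCommGroup M]
    [Module K M] (b : Basis ι K M) (S T : Set M) :
    ∃ (f : Basis ι K M) (I J : Set ι), Disjoint I J ∧ f '' I ⊆ S ∧ f '' J ⊆ T ∧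
      f '' (I ∪ J)ᶜ ⊆ range b ∧ span K (f '' (I ∪ J)) = span K S ⊔ span K T := by
  obtain ⟨s, hsS, hspan_s, hs⟩ := exists_linearIndependent K S
  obtain ⟨u, huST, hsu, hspan_u, hu⟩ :=
    exists_linearIndepOn_id_extension hs (subset_union_left (t := T))
  have htop : ⊤ ≤ span K (u ∪ range b) := b.span_eq.ge.trans (span_mono subset_union_right)
  let e := Basis.extendLe hu subset_union_left htop
  let f := e.reindex (e.indexEquiv b)
  have hrange : range f = range e := e.range_reindex _
  have huf : u ⊆ range f := hrange ▸ Basis.subset_extendLe hu _ htop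
  have hfu : range f ⊆ u ∪ range b := hrange ▸ Basis.extendLe_subset hu _ htop
  refine ⟨f, f ⁻¹' s, f ⁻¹' (u \ s), disjoint_sdiff_right.preimage f,
    (image_preimage_subset f s).trans hsS, ?_, ?_, ?_⟩
  · rintro _ ⟨j, ⟨hju, hjs⟩, rfl⟩
    exact (huST hju).resolve_left hjs
  · rw [← preimage_union, union_sdiff_cancel hsu]
    rintro _ ⟨j, hj, rfl⟩
    exact (hfu (mem_range_self j)).resolve_left hj
  · rw [← preimage_union, union_sdiff_cancel hsu, image_preimage_eq_of_subset huf, ← hspan_s,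
      ← span_union]
    exact le_antisymm (span_mono huST) (span_le.2 hspan_u)

lemma sum_coord_smul_of_mem_span_image {R M ι : Type*} [Semiring R] [AddCommMonoid M] [Module R M]
    (f : Basis ι R M) {D : Finset ι} {x : M} (hx : x ∈ span R (f '' D)) :
    ∑ i ∈ D, f.coord i x • f i = x := by
  conv_rhs => rw [← f.linearCombination_repr x, Finsupp.linearCombination_apply,
    Finsupp.sum_of_support_subset _ (Finset.coe_subset.1 (f.mem_span_image.1 hx)) _
      fun i _ => zero_smul R (f i)]
  rfl

lemma prod_le_pow_card_mul_pow_card {ι : Type*} [Fintype ι] {a : ι → ℝ} (ha : ∀ i, 0 ≤ a i)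
    {D : Finset ι} {r R : ℝ} (hr : ∀ i ∈ D, a i ≤ r) (hR : ∀ i ∉ D, a i ≤ R) (hR1 : 1 ≤ R) :
    ∏ i, a i ≤ r ^ D.card * R ^ Fintype.card ι := by
  classical
  have hD : ∏ i ∈ D, a i ≤ r ^ D.card :=
    (Finset.prod_le_prod (fun i _ => ha i) hr).trans_eq (Finset.prod_const r)
  have hDc : ∏ i ∈ Dᶜ, a i ≤ R ^ Fintype.card ι := by
    calc ∏ i ∈ Dᶜ, a i ≤ R ^ Dᶜ.card :=
          (Finset.prod_le_prod (fun i _ => ha i) fun i hi =>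
            hR i (Finset.mem_compl.1 hi)).trans_eq (Finset.prod_const R)
      _ ≤ R ^ Fintype.card ι := pow_le_pow_right₀ hR1 (Finset.card_le_univ _)
  rw [← Finset.prod_mul_prod_compl D a]
  exact mul_le_mul hD hDc (Finset.prod_nonneg fun i _ => ha i)
    ((Finset.prod_nonneg fun i _ => ha i).trans hD)

section Lattice

variable {E ι : Type*} [NormedAddCommGroup E]

lemma exists_prod_norm_le_mul_pow_finrank [NormedSpace ℝ E] [Fintype ι] (b : Basis ι ℝ E) :
    ∃ Q : ℝ, 0 < Q ∧ ∀ (r : ℝ) (f : Basis ι ℝ E) (D : Finset ι), (∀ i ∈ D, ‖f i‖ ≤ r) →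
      (∀ i ∉ D, f i ∈ range b) → ∏ i, ‖f i‖ ≤ Q * r ^ finrank ℝ (span ℝ (f '' D)) := by
  have hnorm (j : ι) : ‖b j‖ ≤ 1 + ∑ i, ‖b i‖ :=
    (Finset.single_le_sum (fun i _ => norm_nonneg (b i)) (Finset.mem_univ j)).trans
      (le_add_of_nonneg_left zero_le_one)
  refine ⟨(1 + ∑ i, ‖b i‖) ^ Fintype.card ι, by positivity, fun r f D hr hb => ?_⟩
  have hfinrank : finrank ℝ (span ℝ (f '' D)) = D.card := by
    classical
    have hindep : LinearIndepOn ℝ id (D.image f : Set E) := by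
      rw [Finset.coe_image]
      exact f.linearIndependent.linearIndepOn_id.mono (image_subset_range f D)
    rw [← Finset.coe_image, finrank_span_finset_eq_card hindep,
      Finset.card_image_of_injective _ f.injective]
  rw [hfinrank, mul_comm]
  refine prod_le_pow_card_mul_pow_card (fun i => norm_nonneg (f i)) hr (fun i hi => ?_)
    (le_add_of_nonneg_right (by positivity))
  obtain ⟨j, hj⟩ := hb i hi
  exact hj ▸ hnorm j

lemma exists_add_eq_norm_le_of_mem_span_sup [NormedSpace ℝ E] [Finite ι] (b : Basis ι ℝ E) :
    ∃ C : ℝ, 0 ≤ C ∧ ∀ (r : ℝ) (S T : Set E),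
      S ⊆ (span ℤ (range b) : Set E) ∩ Metric.closedBall 0 r →
      T ⊆ (span ℤ (range b) : Set E) ∩ Metric.closedBall 0 r →
      ∀ x ∈ span ℝ S ⊔ span ℝ T, ∃ v ∈ span ℝ S, ∃ w ∈ span ℝ T, v + w = x ∧
        ‖v‖ ≤ C * r ^ finrank ℝ ↥(span ℝ S ⊔ span ℝ T) * ‖x‖ ∧
        ‖w‖ ≤ C * r ^ finrank ℝ ↥(span ℝ S ⊔ span ℝ T) * ‖x‖ := by
  classical
  cases nonempty_fintype ι
  obtain ⟨M, hM, hcoord⟩ := exists_norm_coord_smul_le b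
  obtain ⟨Q, hQ, hprod⟩ := exists_prod_norm_le_mul_pow_finrank b
  refine ⟨Fintype.card ι * (M * Q), by positivity, fun r S T hS hT x hx => ?_⟩
  obtain ⟨f, I, J, hIJ, hfI, hfJ, hfc, hspan⟩ := exists_basis_image_subset_span_eq b S T
  lift I to Finset ι using I.toFinite
  lift J to Finset ι using J.toFinite
  rw [← Finset.coe_union] at hspan hfc
  have hfIJ (i : ι) (hi : i ∈ I ∪ J) : f i ∈ (span ℤ (range b) : Set E) ∩ Metric.closedBall 0 r :=
    (Finset.mem_union.1 hi).elim (fun h => hS (hfI (mem_image_of_mem f h)))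
      fun h => hT (hfJ (mem_image_of_mem f h))
  have hfb (i : ι) (hi : i ∉ I ∪ J) : f i ∈ range b := hfc (mem_image_of_mem f hi)
  have hlat (i : ι) : f i ∈ span ℤ (range b) := by
    by_cases hi : i ∈ I ∪ J
    exacts [(hfIJ i hi).1, subset_span (hfb i hi)]
  have hf : ∏ i, ‖f i‖ ≤ Q * r ^ finrank ℝ ↥(span ℝ S ⊔ span ℝ T) := by
    rw [← hspan]
    exact hprod r f (I ∪ J) (fun i hi => mem_closedBall_zero_iff.1 (hfIJ i hi).2) hfb
  have hpart (D : Finset ι) : ‖∑ i ∈ D, f.coord i x • f i‖ ≤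
      Fintype.card ι * (M * Q) * r ^ finrank ℝ ↥(span ℝ S ⊔ span ℝ T) * ‖x‖ := by
    calc ‖∑ i ∈ D, f.coord i x • f i‖
        ≤ ∑ _i ∈ D, M * (‖x‖ * ∏ j, ‖f j‖) := norm_sum_le_of_le D fun i _ => hcoord f hlat i x
      _ ≤ Fintype.card ι * (M * (‖x‖ * ∏ j, ‖f j‖)) := by
        rw [Finset.sum_const, nsmul_eq_mul]
        gcongr
        exact Finset.card_le_univ D
      _ ≤ Fintype.card ι * (M * (‖x‖ * (Q * r ^ finrank ℝ ↥(span ℝ S ⊔ span ℝ T)))) := by gcongr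
      _ = _ := by ring
  have hmem {D : Finset ι} {A : Set E} (hD : f '' D ⊆ A) :
      ∑ i ∈ D, f.coord i x • f i ∈ span ℝ A :=
    sum_mem fun i hi => smul_mem _ _ (subset_span (hD (mem_image_of_mem f hi)))
  refine ⟨_, hmem hfI, _, hmem hfJ, ?_, hpart I, hpart J⟩
  rw [← Finset.sum_union (Finset.disjoint_coe.1 hIJ)]
  exact sum_coord_smul_of_mem_span_image f (hspan ▸ hx)

lemma pow_finrank_span_nonneg [NormedSpace ℝ E] {r : ℝ} {A : Set E}
    (hA : A ⊆ Metric.closedBall 0 r) : 0 ≤ r ^ finrank ℝ (span ℝ A) := by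
  rcases A.eq_empty_or_nonempty with rfl | hne
  · rw [span_empty, finrank_bot, pow_zero]
    exact zero_le_one
  · exact pow_nonneg (Metric.nonempty_closedBall.1 (hne.mono hA)) _

theorem exists_norm_starProjection_span_sup_le [InnerProductSpace ℝ E] [FiniteDimensional ℝ E]
    (b : Basis ι ℝ E) :
    ∃ C : ℝ, 1 ≤ C ∧ ∀ (r : ℝ) (S T : Set E),
      S ⊆ (span ℤ (range b) : Set E) ∩ Metric.closedBall 0 r →
      T ⊆ (span ℤ (range b) : Set E) ∩ Metric.closedBall 0 r →
      ∀ ξ : E, ‖(span ℝ S ⊔ span ℝ T).starProjection ξ‖ ≤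
        C * r ^ finrank ℝ ↥(span ℝ S ⊔ span ℝ T) *
          (‖(span ℝ S).starProjection ξ‖ + ‖(span ℝ T).starProjection ξ‖) := by
  have : Finite ι := Module.Finite.finite_basis b
  obtain ⟨C, hC, hsplit⟩ := exists_add_eq_norm_le_of_mem_span_sup b
  refine ⟨max C 1, le_max_right C 1, fun r S T hS hT ξ => ?_⟩
  have hpow : 0 ≤ r ^ finrank ℝ ↥(span ℝ S ⊔ span ℝ T) := by
    rw [← span_union]
    exact pow_finrank_span_nonneg
      (union_subset (hS.trans inter_subset_right) (hT.trans inter_subset_right))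
  refine (norm_starProjection_le_of_forall_exists_add (mul_nonneg hC hpow)
    (hsplit r S T hS hT) ξ).trans ?_
  gcongr
  exact le_max_left C 1

lemma mul_pow_le_pow_mul_pow {C r : ℝ} (hC : 1 ≤ C) (hr : 0 ≤ r) (hCr : 1 ≤ C * r) {k m N : ℕ}
    (hk : 1 ≤ k) (hkm : k ≤ m) (hmN : m ≤ N) : C * r ^ k ≤ C ^ N * r ^ m := by
  calc C * r ^ k ≤ C ^ k * r ^ k := by
        gcongr
        exact le_self_pow₀ hC (Nat.one_le_iff_ne_zero.1 hk)
    _ = (C * r) ^ k := (mul_pow C r k).symm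
    _ ≤ (C * r) ^ m := pow_le_pow_right₀ hCr hkm
    _ = C ^ m * r ^ m := mul_pow C r m
    _ ≤ C ^ N * r ^ m := by gcongr

theorem projection_sup_le_general [InnerProductSpace ℝ E] [FiniteDimensional ℝ E]
    (b : Basis ι ℝ E) :
    ∃ C : ℝ, 0 < C ∧ ∀ (r : ℝ) (S T : Set E),
      S ⊆ (span ℤ (range b) : Set E) ∩ Metric.closedBall 0 r →
      T ⊆ (span ℤ (range b) : Set E) ∩ Metric.closedBall 0 r →
      ∀ ξ : E, ‖(span ℝ S ⊔ span ℝ T).starProjection ξ‖ ≤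
        C * r ^ (finrank ℝ (span ℝ T) * finrank ℝ E) *
          (‖(span ℝ S).starProjection ξ‖ + ‖(span ℝ T).starProjection ξ‖) := by
  obtain ⟨C, hC, hsharp⟩ := exists_norm_starProjection_span_sup_le b
  refine ⟨C ^ (finrank ℝ E * finrank ℝ E), by positivity, fun r S T hS hT ξ => ?_⟩
  rcases eq_or_ne (span ℝ T) ⊥ with hbot | hbot
  · have hdim : finrank ℝ (span ℝ T) = 0 := by rw [hbot, finrank_bot]
    simpa [hbot, hdim] using
      le_mul_of_one_le_left (norm_nonneg ((span ℝ S).starProjection ξ)) (one_le_pow₀ hC)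
  obtain ⟨θ, hθT, hθ⟩ : ∃ θ ∈ T, θ ≠ 0 := by simpa [span_eq_bot] using hbot
  have hr : 0 ≤ r := (norm_nonneg θ).trans (mem_closedBall_zero_iff.1 (hT hθT).2)
  have hCr : 1 ≤ C * r := by
    have hdim : finrank ℝ ↥(span ℝ {θ} ⊔ span ℝ ∅) = 1 := by
      rw [span_empty, sup_bot_eq, finrank_span_singleton hθ]
    have hline : ‖θ‖ ≤ C * r * ‖θ‖ := by
      simpa [hdim, starProjection_eq_self_iff.2 (mem_span_singleton_self θ)]
        using hsharp r {θ} ∅ (singleton_subset_iff.2 (hT hθT)) (empty_subset _) θ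
    exact (le_mul_iff_one_le_left (norm_pos_iff.2 hθ)).1 hline
  have hT1 : 1 ≤ finrank ℝ (span ℝ T) := one_le_finrank_iff.2 hbot
  have hsup1 : 1 ≤ finrank ℝ ↥(span ℝ S ⊔ span ℝ T) :=
    hT1.trans (Submodule.finrank_mono le_sup_right)
  refine (hsharp r S T hS hT ξ).trans (mul_le_mul_of_nonneg_right ?_ (by positivity))
  exact mul_pow_le_pow_mul_pow hC hr hCr hsup1
    ((Submodule.finrank_le _).trans (Nat.le_mul_of_pos_left _ hT1))
    (Nat.mul_le_mul_right _ (Submodule.finrank_le _))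

end Lattice

lemma exists_basis_dualLattice_eq_span (B : Basis (Fin d) ℝ (EuclideanSpace ℝ (Fin d))) :
    ∃ b : Basis (Fin d) ℝ (EuclideanSpace ℝ (Fin d)), dualLattice B = span ℤ (range b) := by
  let pairing : LinearMap.BilinForm ℝ (EuclideanSpace ℝ (Fin d)) :=
    (2 * Real.pi)⁻¹ • innerₗ (EuclideanSpace ℝ (Fin d))
  have hpi : 2 * Real.pi ≠ 0 := by positivity
  have hpairing : pairing.Nondegenerate :=
    ⟨fun x hx => by simpa [pairing, hpi] using hx x, fun y hy => by simpa [pairing, hpi] using hy y⟩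
  have hint (θ g : EuclideanSpace ℝ (Fin d)) :
      (∃ k : ℤ, ⟪θ, g⟫ = 2 * Real.pi * k) ↔ pairing θ g ∈ (1 : Submodule ℤ ℝ) := by
    simp only [Submodule.mem_one, pairing, LinearMap.smul_apply, innerₗ_apply_apply, smul_eq_mul,
      algebraMap_int_eq, eq_intCast, eq_inv_mul_iff_mul_eq₀ hpi, eq_comm]
  refine ⟨pairing.dualBasis hpairing B, ?_⟩
  rw [← LinearMap.BilinForm.dualSubmodule_span_of_basis]
  ext θ
  exact forall₂_congr fun g _ => hint θ g

/-- Lemma 4.2(2): there is C = C(d,Γ) > 0 such that for all lattice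
r-subspaces V ∈ 𝒱(r,m), W ∈ 𝒱(r,n) with m, n ≤ d−1 and all ξ,
|ξ_{V+W}| ≤ C r^{nd} (|ξ_V| + |ξ_W|). -/
theorem projection_sup_le
    (d : ℕ) (hd : 2 ≤ d) (B : Basis (Fin d) ℝ (EuclideanSpace ℝ (Fin d))) :
    ∃ C : ℝ, 0 < C ∧ ∀ r : ℝ, Submodule.span ℝ (Theta0 B r) = ⊤ →
      ∀ m n : ℕ, m ≤ d - 1 → n ≤ d - 1 →
      ∀ V W : Submodule ℝ (EuclideanSpace ℝ (Fin d)),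
        IsLatticeSubspace B r V → Module.finrank ℝ V = m →
        IsLatticeSubspace B r W → Module.finrank ℝ W = n →
      ∀ ξ : EuclideanSpace ℝ (Fin d),
        ‖projV (V ⊔ W) ξ‖ ≤ C * r ^ (n * d) * (‖projV V ξ‖ + ‖projV W ξ‖) := by
  obtain ⟨b, hb⟩ := exists_basis_dualLattice_eq_span B
  obtain ⟨C, hC, h⟩ := projection_sup_le_general b
  refine ⟨C, hC, ?_⟩
  rintro r - _ _ - - _ _ ⟨S, hS, rfl⟩ - ⟨T, hT, rfl⟩ rfl ξ
  have hΘ : Theta0 B r = (span ℤ (range b) : Set _) ∩ Metric.closedBall 0 r := by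
    rw [← hb]
    ext θ
    simp [Theta0]
  simpa [projV] using h r S T (hΘ ▸ hS) (hΘ ▸ hT) ξ
end
end

section
/- There is a constant C > 0, depending only on d and Γ, such that the following holds. Let θ₁, …, θ_m ∈ Θ_r⁰ and suppose η is θ₁,…,θ_m-resonant congruent to ξ, i.e. there is a chain ξ = ξ₀, ξ₁, …, ξ_m = η with ξ_j ∈ Υ_{θ_j}(ξ_{j−1}) for each j. If V = span(θ₁, …, θ_m) has dimension n, then |ξ_V| ≤ C ρ^{α₁} r^{(n−1)d}. -/
noncomputable section

open Set Submodule Module MeasureTheory Relation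
open scoped RealInnerProductSpace

variable {d : ℕ}

/-!
A determinant of linearly independent lattice vectors, taken in a lattice basis, is a nonzero
integer, and it is at most a constant times the product of their norms. A lattice vector `θ` with
`‖θ‖ ≤ r` is therefore at distance at least a constant times `r ^ (1 - d)` from any subspace `W` not
containing it that is spanned by such vectors, so that the component `u` of `θ` orthogonal to `W`
satisfies `‖θ‖ ≤ K * r ^ d * ‖u‖`.

Now adjoin the `θ j` to `W` one at a time. If the last one, `θ`, lies outside `W`, then
`ξ_{W ⊕ ℝθ} = ξ_W + ξ_u`, and since `ξ` differs from the last point `η` on the previous chain by an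
element of `W`, `⟪ξ, u⟫ = ⟪η, u⟫ = ⟪η, θ⟫ - ⟪η_W, θ⟫`. The first term is controlled by the layer of
`θ`, the second by the induction hypothesis for the reversed chain, which starts at `η`. Each new
dimension thus costs a factor of order `r ^ d`.
-/

/-- Angular separation: each vector of `Θ` makes an angle of sine at least `1 / T` with every
subspace that is spanned by vectors of `Θ` and does not contain it. -/
def IsAngleSeparated {E : Type*} [NormedAddCommGroup E] [NormedSpace ℝ E] (T : ℝ) (Θ : Set E) :
    Prop :=
  ∀ S ⊆ Θ, ∀ θ ∈ Θ, θ ∉ span ℝ S → ∀ w ∈ span ℝ S, ‖θ‖ ≤ T * ‖θ - w‖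

theorem IsAngleSeparated.mono {E : Type*} [NormedAddCommGroup E] [NormedSpace ℝ E] {T : ℝ}
    {Θ Θ' : Set E} (hT : IsAngleSeparated T Θ) (h : Θ' ⊆ Θ) : IsAngleSeparated T Θ' :=
  fun S hS θ hθ => hT S (hS.trans h) θ (h hθ)

section LatticeSeparation

theorem map_update_sub_of_mem_span {R M N ι : Type*} [Ring R] [AddCommGroup M] [Module R M]
    [AddCommGroup N] [Module R N] [DecidableEq ι] (f : M [⋀^ι]→ₗ[R] N) (v : ι → M) (i : ι) {w : M}
    (hw : w ∈ span R (v '' {i}ᶜ)) : f (Function.update v i (v i - w)) = f v := by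
  suffices f (Function.update v i w) = 0 by
    rw [f.map_update_sub, Function.update_eq_self, this, sub_zero]
  induction hw using span_induction with
  | mem y hy =>
    obtain ⟨j, hj, rfl⟩ := hy
    exact f.map_update_self v (Ne.symm hj)
  | zero => exact f.map_update_zero v i
  | add y z _ _ hy hz => rw [f.map_update_add, hy, hz, add_zero]
  | smul c y _ hy => rw [f.map_update_smul, hy, smul_zero]

theorem one_le_abs_det_of_mem_span_int {K V ι : Type*} [Field K] [LinearOrder K]
    [IsStrictOrderedRing K] [AddCommGroup V] [Module K V] [Fintype ι] [DecidableEq ι]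
    (b : Basis ι K V) {v : ι → V} (hv : LinearIndependent K v)
    (hvb : ∀ i, v i ∈ span ℤ (range b)) : 1 ≤ |b.det v| := by
  choose A hA using fun i j => (b.mem_span_iff_repr_mem ℤ (v j)).1 (hvb j) i
  have hdet : b.det v = ((Matrix.of A).det : ℤ) := by
    rw [b.det_apply, Int.cast_det]
    congr 1
    ext i j
    exact (hA i j).symm
  have := b.finiteDimensional_of_finite
  have hne : b.det v ≠ 0 :=
    (b.is_basis_iff_det.1 ⟨hv, hv.span_eq_top_of_card_eq_finrank'
      (finrank_eq_card_basis b).symm⟩).ne_zero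
  rw [hdet] at hne ⊢
  exact_mod_cast Int.one_le_abs (Int.cast_ne_zero.1 hne)

theorem exists_linearIndependent_of_notMem_span {K V ι : Type*} [DivisionRing K]
    [AddCommGroup V] [Module K V] (b : Basis ι K V) {S : Set V} {θ : V} (hθ : θ ∉ span K S) :
    ∃ (v : ι → V) (i : ι), LinearIndependent K v ∧ v i = θ ∧ span K S ≤ span K (v '' {i}ᶜ) ∧
      range v ⊆ insert θ S ∪ range b := by
  obtain ⟨s, hsS, hspan, hs⟩ := exists_linearIndependent K S
  rw [← hspan] at hθ ⊢
  have hins : LinearIndepOn K id (insert θ s) := LinearIndepOn.id_insert hs hθ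
  have hsub : insert θ s ⊆ insert θ S ∪ range b :=
    (insert_subset_insert hsS).trans subset_union_left
  have htop : ⊤ ≤ span K (insert θ S ∪ range b) :=
    b.span_eq.ge.trans (span_mono subset_union_right)
  let e := Basis.extendLe hins hsub htop
  let v := e.reindex (e.indexEquiv b)
  have hrange : range v = range e := e.range_reindex _
  have hsv : insert θ s ⊆ range v := hrange ▸ Basis.subset_extendLe hins hsub htop
  obtain ⟨i, hi⟩ := hsv (mem_insert θ s)
  refine ⟨v, i, v.linearIndependent, hi, span_mono fun y hy => ?_,
    hrange ▸ Basis.extendLe_subset hins hsub htop⟩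
  obtain ⟨j, rfl⟩ := hsv (mem_insert_of_mem θ hy)
  refine ⟨j, fun hj => hθ ?_, rfl⟩
  rw [← hi, ← mem_singleton_iff.1 hj]
  exact subset_span hy

theorem exists_pos_forall_le_norm {E : Type*} [NormedAddCommGroup E] (L : Submodule ℤ E)
    [DiscreteTopology L] : ∃ c > 0, ∀ x ∈ L, x ≠ 0 → c ≤ ‖x‖ := by
  obtain ⟨c, hc, hball⟩ := Metric.exists_ball_inter_eq_singleton_of_mem_discrete
    (isDiscrete_iff_discreteTopology.2 ‹DiscreteTopology L›) L.zero_mem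
  refine ⟨c, hc, fun x hx hx0 => le_of_not_gt fun hlt => hx0 ?_⟩
  exact hball.subset ⟨mem_ball_zero_iff.2 hlt, hx⟩

variable {E ι : Type*} [NormedAddCommGroup E] [NormedSpace ℝ E] [Fintype ι]

theorem continuous_det [DecidableEq ι] (b : Basis ι ℝ E) : Continuous b.det := by
  have := b.finiteDimensional_of_finite
  refine Continuous.matrix_det (continuous_matrix fun i j => ?_)
  exact (b.coord i).continuous_of_finiteDimensional.comp (continuous_apply j)

theorem exists_one_le_mul_prod_norm_mul_norm_sub [DecidableEq ι] (b : Basis ι ℝ E) :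
    ∃ K > 0, ∀ v : ι → E, LinearIndependent ℝ v → (∀ j, v j ∈ span ℤ (range b)) →
      ∀ i, ∀ w ∈ span ℝ (v '' {i}ᶜ),
        1 ≤ K * (∏ j ∈ Finset.univ.erase i, ‖v j‖) * ‖v i - w‖ := by
  obtain ⟨K, hK, hdet⟩ := b.det.toMultilinearMap.exists_bound_of_continuous (continuous_det b)
  refine ⟨K, hK, fun v hv hvb i w hw => ?_⟩
  calc 1 ≤ |b.det v| := one_le_abs_det_of_mem_span_int b hv hvb
    _ = ‖b.det (Function.update v i (v i - w))‖ := by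
        rw [map_update_sub_of_mem_span _ v i hw, Real.norm_eq_abs]
    _ ≤ K * ∏ j, ‖Function.update v i (v i - w) j‖ := hdet _
    _ = K * ((∏ j ∈ Finset.univ.erase i, ‖v j‖) * ‖v i - w‖) := by
        rw [← Finset.prod_erase_mul _ _ (Finset.mem_univ i), Function.update_self]
        congr 2
        refine Finset.prod_congr rfl fun j hj => ?_
        rw [Function.update_of_ne (Finset.ne_of_mem_erase hj)]
    _ = _ := (mul_assoc ..).symm

/- Vectors of `b` complete the given lattice vectors to a full independent family; they are at most
a constant times as long as any nonzero lattice vector, so they do not affect the power of `r`. -/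
theorem exists_isAngleSeparated (b : Basis ι ℝ E) :
    ∃ K : ℝ, 1 ≤ K ∧ ∀ r,
      IsAngleSeparated (K * r ^ Fintype.card ι) {θ | θ ∈ span ℤ (range b) ∧ ‖θ‖ ≤ r} := by
  classical
  obtain ⟨c, hc, hmin⟩ := exists_pos_forall_le_norm (span ℤ (range b))
  obtain ⟨K, hK, hdist⟩ := exists_one_le_mul_prod_norm_mul_norm_sub b
  set D := max 1 ((∑ j, ‖b j‖) / c)
  refine ⟨max 1 (K * D ^ (Fintype.card ι - 1)), le_max_left .., fun r S hS θ hθ hθS w hw => ?_⟩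
  have hcr : c ≤ r := (hmin θ hθ.1 fun h => hθS (h ▸ zero_mem _)).trans hθ.2
  have hr : 0 ≤ r := hc.le.trans hcr
  have hb (j : ι) : ‖b j‖ ≤ D * r := calc
    ‖b j‖ ≤ ∑ j, ‖b j‖ := Finset.single_le_sum (fun j _ => norm_nonneg (b j)) (Finset.mem_univ j)
    _ = (∑ j, ‖b j‖) / c * c := (div_mul_cancel₀ _ hc.ne').symm
    _ ≤ D * r := by
      gcongr
      exact le_max_right ..
  obtain ⟨v, i, hv, rfl, hSv, hvsub⟩ := exists_linearIndependent_of_notMem_span b hθS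
  have hvL (j : ι) : v j ∈ span ℤ (range b) ∧ ‖v j‖ ≤ D * r := by
    rcases hvsub (mem_range_self j) with h | ⟨k, hk⟩
    · have hj := insert_subset hθ hS h
      exact ⟨hj.1, hj.2.trans (le_mul_of_one_le_left hr (le_max_left ..))⟩
    · exact hk ▸ ⟨subset_span (mem_range_self k), hb k⟩
  have hprod : ∏ j ∈ Finset.univ.erase i, ‖v j‖ ≤ (D * r) ^ (Fintype.card ι - 1) :=
    (Finset.prod_le_prod (fun _ _ => norm_nonneg _) fun j _ => (hvL j).2).trans
      (by simp [Finset.card_erase_of_mem])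
  have hcard : Fintype.card ι - 1 + 1 = Fintype.card ι :=
    Nat.sub_add_cancel (Fintype.card_pos_iff.2 ⟨i⟩)
  calc ‖v i‖ ≤ r * 1 := by simpa using hθ.2
    _ ≤ r * (K * (D * r) ^ (Fintype.card ι - 1) * ‖v i - w‖) := by
        gcongr
        exact (hdist v hv (fun j => (hvL j).1) i w (hSv hw)).trans (by gcongr)
    _ = K * D ^ (Fintype.card ι - 1) * r ^ (Fintype.card ι - 1 + 1) * ‖v i - w‖ := by ring
    _ ≤ _ := by
        rw [hcard]
        gcongr
        exact le_max_right ..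

end LatticeSeparation

section Projection

theorem starProjection_sup_of_isOrtho {𝕜 E : Type*} [RCLike 𝕜] [NormedAddCommGroup E]
    [InnerProductSpace 𝕜 E] {U V : Submodule 𝕜 E} [U.HasOrthogonalProjection]
    [V.HasOrthogonalProjection] [(U ⊔ V).HasOrthogonalProjection] (h : U ⟂ V) (ξ : E) :
    (U ⊔ V).starProjection ξ = U.starProjection ξ + V.starProjection ξ := by
  refine eq_starProjection_of_mem_orthogonal
    (add_mem_sup (starProjection_apply_mem U ξ) (starProjection_apply_mem V ξ)) ?_
  rw [← inf_orthogonal]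
  constructor
  · rw [← sub_sub]
    exact sub_mem (U.sub_starProjection_mem_orthogonal ξ) (h.symm (starProjection_apply_mem V ξ))
  · rw [add_comm, ← sub_sub]
    exact sub_mem (V.sub_starProjection_mem_orthogonal ξ) (h (starProjection_apply_mem U ξ))

theorem sup_span_singleton_sub {R M : Type*} [Ring R] [AddCommGroup M] [Module R M]
    (W : Submodule R M) {w : M} (hw : w ∈ W) (θ : M) :
    W ⊔ span R {θ - w} = W ⊔ span R {θ} := by
  refine le_antisymm (sup_le le_sup_left ?_) (sup_le le_sup_left ?_) <;>
    rw [span_singleton_le_iff_mem]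
  · exact sub_mem (mem_sup_right (mem_span_singleton_self θ)) (mem_sup_left hw)
  · simpa using add_mem (mem_sup_right (mem_span_singleton_self (θ - w))) (mem_sup_left hw)

variable {E : Type*} [NormedAddCommGroup E] [InnerProductSpace ℝ E]

theorem norm_starProjection_span_singleton_le {u ξ : E} {c : ℝ} (hc : 0 ≤ c)
    (h : |⟪u, ξ⟫| ≤ c * ‖u‖) : ‖(span ℝ {u}).starProjection ξ‖ ≤ c := by
  rcases eq_or_ne u 0 with rfl | hu
  · simpa [starProjection_singleton]
  · have hu : 0 < ‖u‖ := norm_pos_iff.2 hu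
    calc ‖(span ℝ {u}).starProjection ξ‖ = |⟪u, ξ⟫| / ‖u‖ := by
          rw [starProjection_singleton, RCLike.ofReal_real_eq_id, id, norm_smul, norm_div, norm_pow,
            norm_norm, Real.norm_eq_abs]
          field_simp
      _ ≤ c := (div_le_iff₀ hu).2 h

variable [FiniteDimensional ℝ E] {V W : Submodule ℝ E} {ξ η θ : E} {M R T : ℝ}

theorem norm_starProjection_le_add_mul (hV : V = W ⊔ span ℝ {θ}) (hR : 0 ≤ R) (hT : 0 ≤ T)
    (hξ : ‖W.starProjection ξ‖ ≤ M) (hη : ‖W.starProjection η‖ ≤ M) (hξη : ξ - η ∈ W)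
    (hηθ : |⟪η, θ⟫| ≤ R * ‖θ‖) (hθ : ‖θ‖ ≤ T * ‖θ - W.starProjection θ‖) :
    ‖V.starProjection ξ‖ ≤ M + (R + M) * T := by
  have hM : 0 ≤ M := (norm_nonneg _).trans hξ
  set u := θ - W.starProjection θ
  have hWu : W ⟂ span ℝ {u} := by
    rw [isOrtho_comm, isOrtho_iff_le, span_singleton_le_iff_mem]
    exact W.sub_starProjection_mem_orthogonal θ
  have huξ : ⟪u, ξ⟫ = ⟪η, θ⟫ - ⟪W.starProjection η, θ⟫ := by
    have huξη : ⟪u, ξ - η⟫ = 0 := W.starProjection_inner_eq_zero θ _ hξη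
    rw [inner_sub_right, sub_eq_zero] at huξη
    rw [huξη, inner_starProjection_left_eq_right, ← inner_sub_right, real_inner_comm]
  obtain rfl : V = W ⊔ span ℝ {u} :=
    hV.trans (sup_span_singleton_sub W (W.starProjection_apply_mem θ) θ).symm
  rw [starProjection_sup_of_isOrtho hWu]
  refine norm_add_le_of_le hξ (norm_starProjection_span_singleton_le (by positivity) ?_)
  calc |⟪u, ξ⟫| ≤ |⟪η, θ⟫| + |⟪W.starProjection η, θ⟫| := huξ ▸ abs_sub _ _
    _ ≤ R * ‖θ‖ + M * ‖θ‖ := by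
        gcongr
        exact (abs_real_inner_le_norm _ _).trans (by gcongr)
    _ = (R + M) * ‖θ‖ := by ring
    _ ≤ (R + M) * (T * ‖u‖) := by gcongr
    _ = (R + M) * T * ‖u‖ := by ring

theorem norm_starProjection_le_mul_pow_finrank (hV : V = W ⊔ span ℝ {θ}) (hR : 0 ≤ R)
    (hξ : ‖W.starProjection ξ‖ ≤ R * (3 * T) ^ (finrank ℝ W - 1))
    (hη : ‖W.starProjection η‖ ≤ R * (3 * T) ^ (finrank ℝ W - 1)) (hξη : ξ - η ∈ W)
    (hηθ : |⟪η, θ⟫| ≤ R * ‖θ‖) (hsep : θ ∉ W → ∀ w ∈ W, ‖θ‖ ≤ T * ‖θ - w‖) :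
    ‖V.starProjection ξ‖ ≤ R * (3 * T) ^ (finrank ℝ V - 1) := by
  by_cases hθ : θ ∈ W
  · obtain rfl : V = W := hV.trans (sup_eq_left.2 ((span_singleton_le_iff_mem θ W).2 hθ))
    exact hξ
  specialize hsep hθ
  have hfinrank : finrank ℝ V - 1 = finrank ℝ W := by
    rw [hV, finrank_sup_span_singleton hθ, Nat.add_sub_cancel]
  rw [hfinrank]
  rcases Nat.eq_zero_or_eq_succ_pred (finrank ℝ W) with hW | hW
  · obtain rfl := finrank_eq_zero.1 hW
    simpa using norm_starProjection_le_add_mul (M := 0) (T := 1) hV hR zero_le_one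
      (by simp) (by simp) hξη hηθ (by simp)
  have hT : 1 ≤ T := by
    have hθ0 : 0 < ‖θ‖ := norm_pos_iff.2 fun h => hθ (h ▸ W.zero_mem)
    exact le_of_mul_le_mul_right (by simpa using hsep 0 W.zero_mem) hθ0
  rw [hW, Nat.succ_eq_add_one] at hξ hη ⊢
  set M := R * (3 * T) ^ (finrank ℝ W).pred
  have hRM : R ≤ M := le_mul_of_one_le_right hR (one_le_pow₀ (by linarith))
  have hM : 0 ≤ M := hR.trans hRM
  calc ‖V.starProjection ξ‖ ≤ M + (R + M) * T :=
        norm_starProjection_le_add_mul hV hR (by positivity) hξ hη hξη hηθ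
          (hsep _ (W.starProjection_apply_mem θ))
    _ ≤ M * T + (M + M) * T := by
        gcongr
        exact le_mul_of_one_le_right hM hT
    _ = R * (3 * T) ^ ((finrank ℝ W).pred + 1) := by ring

end Projection

/-- A chain `x 0, …, x m` of resonant congruences along `θ 0, …, θ (m - 1)`, with `R` for the
width `ρ ^ α₁` of the layers. Compared with `upsTheta`, steps may be real multiples of `θ j`, and
the layers are closed, so that `θ j = 0` needs no separate clause. -/
structure IsResonantChain {E : Type*} [NormedAddCommGroup E] [InnerProductSpace ℝ E] {m : ℕ}
    (R : ℝ) (θ : Fin m → E) (x : Fin (m + 1) → E) : Prop where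
  sub_mem (j : Fin m) : x j.castSucc - x j.succ ∈ span ℝ {θ j}
  abs_inner_castSucc_le (j : Fin m) : |⟪x j.castSucc, θ j⟫| ≤ R * ‖θ j‖
  abs_inner_succ_le (j : Fin m) : |⟪x j.succ, θ j⟫| ≤ R * ‖θ j‖

namespace IsResonantChain

variable {E : Type*} [NormedAddCommGroup E] [InnerProductSpace ℝ E] {m : ℕ} {R T : ℝ}

protected theorem rev {θ : Fin m → E} {x : Fin (m + 1) → E} (h : IsResonantChain R θ x) :
    IsResonantChain R (θ ∘ Fin.rev) (x ∘ Fin.rev) where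
  sub_mem j := by
    simpa [Fin.rev_succ, Fin.rev_castSucc] using neg_mem (h.sub_mem j.rev)
  abs_inner_castSucc_le j := by
    simpa [Fin.rev_castSucc] using h.abs_inner_succ_le j.rev
  abs_inner_succ_le j := by
    simpa [Fin.rev_succ] using h.abs_inner_castSucc_le j.rev

protected theorem init {θ : Fin (m + 1) → E} {x : Fin (m + 2) → E} (h : IsResonantChain R θ x) :
    IsResonantChain R (Fin.init θ) (Fin.init x) where
  sub_mem j := h.sub_mem j.castSucc
  abs_inner_castSucc_le j := h.abs_inner_castSucc_le j.castSucc
  abs_inner_succ_le j := h.abs_inner_succ_le j.castSucc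

theorem zero_sub_mem_span {θ : Fin m → E} {x : Fin (m + 1) → E} (h : IsResonantChain R θ x)
    (i : Fin (m + 1)) : x 0 - x i ∈ span ℝ (range θ) := by
  induction i using Fin.induction with
  | zero => simp
  | succ j ih =>
    rw [← sub_add_sub_cancel _ (x j.castSucc)]
    exact add_mem ih (span_mono (singleton_subset_iff.2 (mem_range_self j)) (h.sub_mem j))

variable [FiniteDimensional ℝ E]

theorem norm_starProjection_le (hR : 0 ≤ R) {θ : Fin m → E} {x : Fin (m + 1) → E}
    (h : IsResonantChain R θ x) (hT : IsAngleSeparated T (range θ)) :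
    ‖(span ℝ (range θ)).starProjection (x 0)‖ ≤
      R * (3 * T) ^ (finrank ℝ (span ℝ (range θ)) - 1) := by
  induction m with
  | zero =>
    have hbot : span ℝ (range θ) = ⊥ := by simp [range_eq_empty]
    rw [hbot]
    simpa using hR
  | succ m ih =>
    have hTinit : IsAngleSeparated T (range (Fin.init θ)) := hT.mono (range_comp_subset_range _ _)
    have hfirst := ih h.init hTinit
    have hlast := ih h.init.rev (by rwa [Fin.rev_surjective.range_comp])
    rw [Fin.rev_surjective.range_comp, Function.comp_apply, Fin.rev_zero] at hlast
    have hspan : span ℝ (range θ) = span ℝ (range (Fin.init θ)) ⊔ span ℝ {θ (Fin.last m)} := by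
      rw [sup_comm, ← span_insert, ← Fin.range_snoc, Fin.snoc_init_self]
    exact norm_starProjection_le_mul_pow_finrank hspan hR hfirst hlast
      (h.init.zero_sub_mem_span (Fin.last m)) (h.abs_inner_castSucc_le (Fin.last m))
      (hT _ (range_comp_subset_range Fin.castSucc θ) _ (mem_range_self (Fin.last m)))

end IsResonantChain

theorem nondegenerate_smul_innerₗ {E : Type*} [NormedAddCommGroup E] [InnerProductSpace ℝ E] {c : ℝ}
    (hc : c ≠ 0) : (c • innerₗ E).Nondegenerate := by
  have hrefl : (c • innerₗ E).IsRefl := fun x y h => by simpa [real_inner_comm] using h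
  refine hrefl.nondegenerate_iff_separatingLeft.2 fun x hx => ?_
  simpa [hc] using hx x

theorem exists_basis_span_int_eq_dualLattice (B : Basis (Fin d) ℝ (EuclideanSpace ℝ (Fin d))) :
    ∃ b : Basis (Fin d) ℝ (EuclideanSpace ℝ (Fin d)),
      (span ℤ (range b) : Set (EuclideanSpace ℝ (Fin d))) = dualLattice B := by
  have h2π : 2 * Real.pi ≠ 0 := Real.two_pi_pos.ne'
  refine ⟨LinearMap.BilinForm.dualBasis _ (nondegenerate_smul_innerₗ (inv_ne_zero h2π)) B, ?_⟩
  rw [← LinearMap.BilinForm.dualSubmodule_span_of_basis]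
  ext θ
  refine forall₂_congr fun g _ => Submodule.mem_one.trans (exists_congr fun k => ?_)
  change (k : ℝ) = (2 * Real.pi)⁻¹ * ⟪θ, g⟫ ↔ _
  rw [eq_inv_mul_iff_mul_eq₀ h2π, eq_comm]

theorem abs_inner_le_of_mem_layer {ρ a : ℝ} {θ ξ : EuclideanSpace ℝ (Fin d)}
    (hξ : ξ ∈ layer ρ a θ) : |⟪ξ, θ⟫| ≤ ρ ^ a * ‖θ‖ := by
  rcases hξ with rfl | hlt
  · simp
  · exact hlt.le

theorem isResonantChain_of_mem_upsTheta {ρ a : ℝ} {m : ℕ} {θ : Fin m → EuclideanSpace ℝ (Fin d)}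
    {x : Fin (m + 1) → EuclideanSpace ℝ (Fin d)}
    (hx : ∀ j, x j.succ ∈ upsTheta ρ a (θ j) (x j.castSucc)) :
    IsResonantChain (ρ ^ a) θ x where
  sub_mem j := by
    obtain ⟨-, -, l, hl⟩ := hx j
    exact hl ▸ smul_mem _ _ (mem_span_singleton_self _)
  abs_inner_castSucc_le j := abs_inner_le_of_mem_layer (hx j).1
  abs_inner_succ_le j := abs_inner_le_of_mem_layer (hx j).2.1

theorem proj_span_chain_le_general {E ι : Type*} [NormedAddCommGroup E] [InnerProductSpace ℝ E]
    [FiniteDimensional ℝ E] [Fintype ι] (b : Basis ι ℝ E) :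
    ∃ C > 0, ∀ (R r : ℝ) (m : ℕ) (θ : Fin m → E) (x : Fin (m + 1) → E), 0 ≤ R →
      (∀ j, θ j ∈ span ℤ (range b) ∧ ‖θ j‖ ≤ r) → IsResonantChain R θ x →
        ‖(span ℝ (range θ)).starProjection (x 0)‖ ≤
          C * R * r ^ ((finrank ℝ (span ℝ (range θ)) - 1) * Fintype.card ι) := by
  obtain ⟨K, hK, hsep⟩ := exists_isAngleSeparated b
  refine ⟨(3 * K) ^ finrank ℝ E, by positivity, fun R r m θ x hR hθ h => ?_⟩
  set n := finrank ℝ (span ℝ (range θ))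
  have hn : n - 1 ≤ finrank ℝ E := (Nat.sub_le _ _).trans (finrank_le _)
  have hpow : 0 ≤ r ^ ((n - 1) * Fintype.card ι) := by
    rcases isEmpty_or_nonempty (Fin m) with hm | ⟨⟨j⟩⟩
    · have hn0 : n = 0 := by
        rw [finrank_eq_zero, range_eq_empty, span_empty]
      simp [hn0]
    · exact pow_nonneg ((norm_nonneg _).trans (hθ j).2) _
  calc ‖(span ℝ (range θ)).starProjection (x 0)‖
      ≤ R * (3 * (K * r ^ Fintype.card ι)) ^ (n - 1) :=
        h.norm_starProjection_le hR ((hsep r).mono (range_subset_iff.2 hθ))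
    _ = (3 * K) ^ (n - 1) * R * r ^ ((n - 1) * Fintype.card ι) := by ring
    _ ≤ (3 * K) ^ finrank ℝ E * R * r ^ ((n - 1) * Fintype.card ι) := by
        gcongr
        linarith

/-- Lemma 5.6(i): there is C = C(d,Γ) > 0 such that, under the standing
parameter conditions, whenever η is θ₁,…,θ_m-resonant congruent to ξ via a chain
ξ = x₀, x₁, …, x_m = η with x_j ∈ Υ_{θ_j}(x_{j−1}), and V = span(θ₁,…,θ_m) has
dimension n, one has |ξ_V| ≤ C ρ^{α₁} r^{(n−1)d}. -/
theorem proj_span_chain_le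
    (d : ℕ) (hd : 2 ≤ d) (B : Basis (Fin d) ℝ (EuclideanSpace ℝ (Fin d))) :
    ∃ C : ℝ, 0 < C ∧ ∀ (ρ r κ : ℝ) (α : ℕ → ℝ), GoodParams B ρ r κ α →
      ∀ (m : ℕ) (θ : Fin m → EuclideanSpace ℝ (Fin d))
        (x : Fin (m + 1) → EuclideanSpace ℝ (Fin d)),
        (∀ j : Fin m, θ j ∈ Theta0 B r) →
        (∀ j : Fin m, x j.succ ∈ upsTheta ρ (α 1) (θ j) (x j.castSucc)) →
      ∀ n : ℕ, Module.finrank ℝ (Submodule.span ℝ (Set.range θ)) = n →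
        ‖projV (Submodule.span ℝ (Set.range θ)) (x 0)‖ ≤
          C * ρ ^ α 1 * r ^ ((n - 1) * d) := by
  obtain ⟨b, hb⟩ := exists_basis_span_int_eq_dualLattice B
  obtain ⟨C, hC, hbound⟩ := proj_span_chain_le_general b
  refine ⟨C, hC, ?_⟩
  rintro ρ r κ α ⟨hρ, -⟩ m θ x hθ hx _ rfl
  have hlattice (j : Fin m) : θ j ∈ span ℤ (range b) ∧ ‖θ j‖ ≤ r :=
    ⟨hb.ge (hθ j).1, (hθ j).2⟩
  have h := hbound (ρ ^ α 1) r m θ x (by positivity) hlattice (isResonantChain_of_mem_upsTheta hx)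
  rwa [Fintype.card_fin] at h
end
end
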